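/- Suppose 𝒴 = span(ℝ^N_0, Y_1,…,Y_R) is a finite-dimensional vector subspace of L^0(Ω,𝐅_T,P) with ℝ^N_0 ⊆ 𝒴, and NCA(𝒴) holds. If f ∈ L^0(Ω,𝐅_T,P) is not 𝒴-collectively replicable and the classical super-replication prices satisfy ρ_{i,+}(f^i) < +∞ and ρ_{i,+}(−f^i) < +∞ for every i, then the set Π(f) of NCA(𝒴)-prices of f is not closed in ℝ^N. -/

import Mathlib

open MeasureTheory Filter Topology

namespace CollectiveArb

variable {Ω : Type*}

/-- Terminal gains `K_i` of admissible (predictable) strategies for an agent with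
filtration `F`, trading the assets indexed by `A`, over times `1,…,T`. -/
def gainsSet {J : ℕ} (F : ℕ → MeasurableSpace Ω) (T : ℕ)
    (A : Finset (Fin J)) (X : Fin J → ℕ → Ω → ℝ) : Set (Ω → ℝ) :=
  { g | ∃ H : Fin J → ℕ → Ω → ℝ,
      (∀ j ∈ A, ∀ s, 1 ≤ s → s ≤ T → Measurable[F (s - 1)] (H j s)) ∧
      g = fun ω => ∑ j ∈ A, ∑ s ∈ Finset.Icc 1 T, H j s ω * (X j s ω - X j (s - 1) ω) }

/-- No collective arbitrage for the gains sets `K` and the exchange set `Y`: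
`(K₁ × ⋯ × K_N + Y) ∩ L⁰₊ = {0}`. -/
def NCA {N : ℕ} [MeasurableSpace Ω] (P : Measure Ω)
    (K : Fin N → Set (Ω → ℝ)) (Y : Set (Fin N → Ω → ℝ)) : Prop :=
  ∀ k : Fin N → Ω → ℝ, ∀ y ∈ Y, (∀ i, k i ∈ K i) →
    (∀ i, ∀ᵐ ω ∂P, 0 ≤ k i ω + y i ω) →
    ∀ i, (fun ω => k i ω + y i ω) =ᵐ[P] fun _ => (0 : ℝ)

/-- `K^𝒴 = ⨉ᵢ (Kᵢ − L⁰₊(ℱᵢ_T)) + 𝒴`. -/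
def KY {N : ℕ} [MeasurableSpace Ω] (P : Measure Ω)
    (FT : Fin N → MeasurableSpace Ω)
    (K : Fin N → Set (Ω → ℝ)) (Y : Set (Fin N → Ω → ℝ)) : Set (Fin N → Ω → ℝ) :=
  { f | ∃ (k l y : Fin N → Ω → ℝ), y ∈ Y ∧ (∀ i, k i ∈ K i) ∧
      (∀ i, Measurable[FT i] (l i) ∧ (∀ᵐ ω ∂P, 0 ≤ l i ω)) ∧
      ∀ i, f i = fun ω => k i ω - l i ω + y i ω }

/-- `ℝ^N_0`: zero-sum deterministic exchanges, viewed as constant random vectors. -/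
def zeroSum (Ω : Type*) (N : ℕ) : Set (Fin N → Ω → ℝ) :=
  { y | ∃ x : Fin N → ℝ, (∑ i, x i) = 0 ∧ ∀ i, y i = fun _ => x i }

/-- `span(ℝ^N_0, Y_1, …, Y_R)`: the finite-dimensional space of exchanges generated
by `ℝ^N_0` and the random vectors `Ys 1, …, Ys R`. -/
def spanExch {N R : ℕ} (Ys : Fin R → Fin N → Ω → ℝ) : Set (Fin N → Ω → ℝ) :=
  { y | ∃ (x : Fin N → ℝ) (c : Fin R → ℝ), (∑ i, x i) = 0 ∧
      ∀ i, y i = fun ω => x i + ∑ r, c r * Ys r i ω }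

/-- `span(𝒴₀ ∪ {g})` for a vector subspace `𝒴₀`. -/
def spanWith {N : ℕ} (Y0 : Set (Fin N → Ω → ℝ)) (g : Fin N → Ω → ℝ) :
    Set (Fin N → Ω → ℝ) :=
  { y | ∃ w ∈ Y0, ∃ c : ℝ, ∀ i, y i = fun ω => w i ω + c * g i ω }

/-- Equivalent martingale measures `Mᵢₑ` for the assets in `A`, w.r.t. the filtration `F`. -/
def martMeasures {J : ℕ} [MeasurableSpace Ω] (P : Measure Ω)
    (F : ℕ → MeasurableSpace Ω) (T : ℕ) (A : Finset (Fin J))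
    (X : Fin J → ℕ → Ω → ℝ) : Set (Measure Ω) :=
  { Q | IsProbabilityMeasure Q ∧ Q ≪ P ∧ P ≪ Q ∧
      ∀ j ∈ A, (∀ t, t ≤ T → Integrable (X j t) Q) ∧
        ∀ s t, s ≤ t → t ≤ T → X j s =ᵐ[Q] Q[X j t | F s] }

/-- Equivalent collective martingale measures `ℳₑ(𝒴)`. -/
def MeY {J N : ℕ} [MeasurableSpace Ω] (P : Measure Ω)
    (F : Fin N → ℕ → MeasurableSpace Ω) (T : ℕ) (assets : Fin N → Finset (Fin J))
    (X : Fin J → ℕ → Ω → ℝ) (Y : Set (Fin N → Ω → ℝ)) : Set (Fin N → Measure Ω) :=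
  { Q | (∀ i, Q i ∈ martMeasures P (F i) T (assets i) X) ∧
      (∀ y ∈ Y, ∀ i, Integrable (y i) (Q i)) ∧
      ∀ y ∈ Y, (∑ i, ∫ ω, y i ω ∂(Q i)) ≤ 0 }

/-- `ℳ^φ_e(𝒴) = {Q ∈ ℳₑ(𝒴) : E_{Qⁱ}[|φⁱ|] < ∞ ∀ i}`. -/
def MeYphi {J N : ℕ} [MeasurableSpace Ω] (P : Measure Ω)
    (F : Fin N → ℕ → MeasurableSpace Ω) (T : ℕ) (assets : Fin N → Finset (Fin J))
    (X : Fin J → ℕ → Ω → ℝ) (Y : Set (Fin N → Ω → ℝ))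
    (φ : Fin N → Ω → ℝ) : Set (Fin N → Measure Ω) :=
  { Q | Q ∈ MeY P F T assets X Y ∧ ∀ i, Integrable (φ i) (Q i) }

/-- Closedness of a set of random vectors under componentwise `P`-a.s. convergence
of sequences (within `L⁰(Ω, 𝐅_T, P)`). -/
def ClosedAS {N : ℕ} [MeasurableSpace Ω] (P : Measure Ω)
    (FT : Fin N → MeasurableSpace Ω) (S : Set (Fin N → Ω → ℝ)) : Prop :=
  ∀ (f : ℕ → Fin N → Ω → ℝ) (g : Fin N → Ω → ℝ),
    (∀ n, f n ∈ S) → (∀ i, Measurable[FT i] (g i)) →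
    (∀ i, ∀ᵐ ω ∂P, Tendsto (fun n => f n i ω) atTop (𝓝 (g i ω))) →
    g ∈ S

/-- Collective superhedging price `ρ^𝒴₊(f)` (with `inf ∅ = +∞`). -/
noncomputable def rhoPlus {N : ℕ} [MeasurableSpace Ω] (P : Measure Ω)
    (K : Fin N → Set (Ω → ℝ)) (Y : Set (Fin N → Ω → ℝ))
    (f : Fin N → Ω → ℝ) : EReal :=
  sInf { z : EReal | ∃ m : Fin N → ℝ, z = ((∑ i, m i : ℝ) : EReal) ∧
      ∃ k : Fin N → Ω → ℝ, (∀ i, k i ∈ K i) ∧ ∃ y ∈ Y,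
        ∀ i, ∀ᵐ ω ∂P, f i ω ≤ m i + k i ω + y i ω }

/-- Collective subhedging price `ρ^𝒴₋(f)` (with `sup ∅ = −∞`). -/
noncomputable def rhoMinus {N : ℕ} [MeasurableSpace Ω] (P : Measure Ω)
    (K : Fin N → Set (Ω → ℝ)) (Y : Set (Fin N → Ω → ℝ))
    (f : Fin N → Ω → ℝ) : EReal :=
  sSup { z : EReal | ∃ m : Fin N → ℝ, z = ((∑ i, m i : ℝ) : EReal) ∧
      ∃ k : Fin N → Ω → ℝ, (∀ i, k i ∈ K i) ∧ ∃ y ∈ Y,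
        ∀ i, ∀ᵐ ω ∂P, m i + k i ω - y i ω ≤ f i ω }

/-- `ρ^𝒴₊(f)` is attained. -/
def rhoPlusAttained {N : ℕ} [MeasurableSpace Ω] (P : Measure Ω)
    (K : Fin N → Set (Ω → ℝ)) (Y : Set (Fin N → Ω → ℝ))
    (f : Fin N → Ω → ℝ) : Prop :=
  ∃ (m : Fin N → ℝ) (k y : Fin N → Ω → ℝ), y ∈ Y ∧ (∀ i, k i ∈ K i) ∧
    (∀ i, ∀ᵐ ω ∂P, f i ω ≤ m i + k i ω + y i ω) ∧
    rhoPlus P K Y f = ((∑ i, m i : ℝ) : EReal)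

/-- `ρ^𝒴₋(f)` is attained. -/
def rhoMinusAttained {N : ℕ} [MeasurableSpace Ω] (P : Measure Ω)
    (K : Fin N → Set (Ω → ℝ)) (Y : Set (Fin N → Ω → ℝ))
    (f : Fin N → Ω → ℝ) : Prop :=
  ∃ (m : Fin N → ℝ) (k y : Fin N → Ω → ℝ), y ∈ Y ∧ (∀ i, k i ∈ K i) ∧
    (∀ i, ∀ᵐ ω ∂P, m i + k i ω - y i ω ≤ f i ω) ∧
    rhoMinus P K Y f = ((∑ i, m i : ℝ) : EReal)

/-- `f` is `𝒴`-collectively replicable: `f ∈ ℝ^N + (K₁ × ⋯ × K_N) + 𝒴` in `L⁰`. -/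
def Replicable {N : ℕ} [MeasurableSpace Ω] (P : Measure Ω)
    (K : Fin N → Set (Ω → ℝ)) (Y : Set (Fin N → Ω → ℝ))
    (f : Fin N → Ω → ℝ) : Prop :=
  ∃ (m : Fin N → ℝ) (k y : Fin N → Ω → ℝ), y ∈ Y ∧ (∀ i, k i ∈ K i) ∧
    ∀ i, f i =ᵐ[P] fun ω => m i + k i ω + y i ω

/-- Terminal gains of predictable strategies in the extended market consisting of the
assets in `A` together with one additional asset `Z`. -/
def extGainsSet {J : ℕ} (F : ℕ → MeasurableSpace Ω) (T : ℕ)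
    (A : Finset (Fin J)) (X : Fin J → ℕ → Ω → ℝ) (Z : ℕ → Ω → ℝ) : Set (Ω → ℝ) :=
  { g | ∃ (H : Fin J → ℕ → Ω → ℝ) (G : ℕ → Ω → ℝ),
      (∀ j ∈ A, ∀ s, 1 ≤ s → s ≤ T → Measurable[F (s - 1)] (H j s)) ∧
      (∀ s, 1 ≤ s → s ≤ T → Measurable[F (s - 1)] (G s)) ∧
      g = fun ω => (∑ j ∈ A, ∑ s ∈ Finset.Icc 1 T, H j s ω * (X j s ω - X j (s - 1) ω))
        + ∑ s ∈ Finset.Icc 1 T, G s ω * (Z s ω - Z (s - 1) ω) }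

/-- `π ∈ ℝ^N` is an NCA(𝒴)-price for the claims `f = (f¹,…,f^N)`: there are
`𝔽ⁱ`-adapted processes `Zⁱ` (the new assets `X^{J+i}`) with `Zⁱ_0 = πⁱ`, `Zⁱ_T = fⁱ`,
such that NCA(𝒴) holds in the extended market where agent `i` trades the assets in
`(i) ∪ {J+i}`. -/
def IsNCAPrice {J N : ℕ} [MeasurableSpace Ω] (P : Measure Ω)
    (F : Fin N → ℕ → MeasurableSpace Ω) (T : ℕ) (assets : Fin N → Finset (Fin J))
    (X : Fin J → ℕ → Ω → ℝ) (Y : Set (Fin N → Ω → ℝ))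
    (f : Fin N → Ω → ℝ) (pi : Fin N → ℝ) : Prop :=
  ∃ Z : Fin N → ℕ → Ω → ℝ,
    (∀ i t, t ≤ T → Measurable[F i t] (Z i t)) ∧
    (∀ i, Z i 0 =ᵐ[P] fun _ => pi i) ∧
    (∀ i, Z i T =ᵐ[P] f i) ∧
    NCA P (fun i => extGainsSet (F i) T (assets i) X (Z i)) Y

/-- Classical single-agent super-replication price `ρ_{i,+}` (with `inf ∅ = +∞`). -/
noncomputable def rhoIPlus [MeasurableSpace Ω] (P : Measure Ω)
    (Ki : Set (Ω → ℝ)) (g : Ω → ℝ) : EReal :=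
  sInf { z : EReal | ∃ m : ℝ, z = (m : EReal) ∧ ∃ k ∈ Ki, ∀ᵐ ω ∂P, g ω ≤ m + k ω }

/-!
Stack the agents into one classical market on the disjoint union of `N` copies of `Ω`, whose trades
are the deterministic exchanges followed by the dynamic strategies in order of increasing
information. There, `NCA` is ordinary absence of arbitrage, super-replicable claims are closed under
limits in measure, and separation in `L²` followed by exhaustion yields equivalent pricing
measures. Conditional expectations of the stacked claim under such a measure are admissible price
processes, and the zero-sum exchanges force the measure to give the same mass to every agent, so
that expectations of deterministic payoffs see only the sum of the coordinates.

Super-replication costs bound the prices from above. Hence, if the set of prices were closed, it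
would contain a price `π` with maximal coordinate sum. Since `f` is not replicable, `f - π` cannot
be super-replicated at zero cost, so some pricing measure gives it positive expectation; the price
of `f` under that measure then has a strictly larger sum.
-/

/-- An elementary trade: any `info`-measurable number of units of `payoff` may be bought. -/
structure Trade (E : Type*) where
  info : MeasurableSpace E
  payoff : E → ℝ

section Trades

variable {E : Type*}

/-- The total gains of combinations of the trades in `L`. -/
def tradeGains (L : List (Trade E)) : Submodule ℝ (E → ℝ) :=
  Submodule.span ℝ {g | ∃ p ∈ L, ∃ h : E → ℝ, Measurable[p.info] h ∧ g = h * p.payoff}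

/-- The information is nondecreasing along the list, so that a position known at one trade is
still known at all later ones. -/
def IsNested (L : List (Trade E)) : Prop :=
  L.Pairwise fun p q => p.info ≤ q.info

variable {L L' : List (Trade E)} {p : Trade E} {G : MeasurableSpace E}

lemma mul_mem_tradeGains (hp : p ∈ L) {h : E → ℝ} (hh : Measurable[p.info] h) :
    h * p.payoff ∈ tradeGains L :=
  Submodule.subset_span ⟨p, hp, h, hh, rfl⟩

lemma payoff_mem_tradeGains (hp : p ∈ L) : p.payoff ∈ tradeGains L :=
  one_mul p.payoff ▸ mul_mem_tradeGains hp (@measurable_one _ _ _ p.info _)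

lemma tradeGains_mono (hL : L ⊆ L') : tradeGains L ≤ tradeGains L' :=
  Submodule.span_mono fun _ ⟨p, hp, hg⟩ => ⟨p, hL hp, hg⟩

lemma mem_tradeGains_nil {g : E → ℝ} : g ∈ tradeGains [] ↔ g = 0 := by
  simp [tradeGains]

lemma mem_tradeGains_cons {g : E → ℝ} :
    g ∈ tradeGains (p :: L) ↔
      ∃ h : E → ℝ, Measurable[p.info] h ∧ ∃ k ∈ tradeGains L, g = h * p.payoff + k := by
  constructor
  · intro hg
    induction hg using Submodule.span_induction with
    | mem g hg =>
      obtain ⟨q, hq, h, hh, rfl⟩ := hg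
      rcases List.mem_cons.1 hq with rfl | hq
      · exact ⟨h, hh, 0, zero_mem _, by simp⟩
      · exact ⟨0, @measurable_zero _ _ _ p.info _, h * q.payoff, mul_mem_tradeGains hq hh,
          by simp⟩
    | zero => exact ⟨0, @measurable_zero _ _ _ p.info _, 0, zero_mem _, by simp⟩
    | add g g' _ _ ih ih' =>
      obtain ⟨h, hh, k, hk, rfl⟩ := ih
      obtain ⟨h', hh', k', hk', rfl⟩ := ih'
      let := p.info
      exact ⟨h + h', hh.add hh', k + k', add_mem hk hk', by ring⟩
    | smul c g _ ih =>
      obtain ⟨h, hh, k, hk, rfl⟩ := ih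
      let := p.info
      exact ⟨c • h, hh.const_smul c, c • k, Submodule.smul_mem _ c hk, by
        rw [smul_add, smul_mul_assoc]⟩
  · rintro ⟨h, hh, k, hk, rfl⟩
    exact add_mem (mul_mem_tradeGains List.mem_cons_self hh)
      (tradeGains_mono (List.subset_cons_self _ _) hk)

lemma tradeGains_paste {τ : E → ℕ} (hτ : Measurable[G] τ) (hL : ∀ p ∈ L, G ≤ p.info)
    {k : ℕ → E → ℝ} (hk : ∀ n, k n ∈ tradeGains L) : (fun x => k (τ x) x) ∈ tradeGains L := by
  induction L generalizing k with
  | nil =>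
    simp only [mem_tradeGains_nil] at hk ⊢
    ext x
    simp [hk]
  | cons p L ih =>
    simp only [mem_tradeGains_cons] at hk
    choose h hh r hr hk using hk
    rw [List.forall_mem_cons] at hL
    refine mem_tradeGains_cons.2 ⟨fun x => h (τ x) x, ?_, fun x => r (τ x) x, ih hL.2 hr, ?_⟩
    · have hτ' : Measurable[p.info] τ := hτ.mono hL.1 le_rfl
      let := p.info
      exact (measurable_from_prod_countable_right (f := fun q : ℕ × E => h q.1 q.2) hh).comp
        (hτ'.prodMk measurable_id)
    · ext x
      simp [hk]

lemma mul_mem_tradeGains_of_mem {c : E → ℝ} (hc : Measurable[G] c) (hL : ∀ p ∈ L, G ≤ p.info)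
    {k : E → ℝ} (hk : k ∈ tradeGains L) : c * k ∈ tradeGains L := by
  induction hk using Submodule.span_induction with
  | mem _ hk =>
    obtain ⟨p, hp, h, hh, rfl⟩ := hk
    have hc' : Measurable[p.info] c := hc.mono (hL p hp) le_rfl
    let := p.info
    exact mul_assoc c h _ ▸ mul_mem_tradeGains hp (hc'.mul hh)
  | zero => simp
  | add _ _ _ _ ih ih' => exact mul_add c _ _ ▸ add_mem ih ih'
  | smul a _ _ ih => exact mul_smul_comm a c _ ▸ Submodule.smul_mem _ a ih

variable [MeasurableSpace E] {μ : Measure E}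

/-- No nonzero gain is nonnegative. -/
def NoArbitrage (μ : Measure E) (L : List (Trade E)) : Prop :=
  ∀ k ∈ tradeGains L, 0 ≤ᵐ[μ] k → k =ᵐ[μ] 0

/-- The payoff `g` is dominated by a gain of the trades in `L`, at zero initial cost. -/
def SuperReplicable (μ : Measure E) (L : List (Trade E)) (g : E → ℝ) : Prop :=
  ∃ k ∈ tradeGains L, g ≤ᵐ[μ] k

/-- The super-replicable payoffs are sequentially closed under a.e. convergence. -/
def SuperReplicationClosed (μ : Measure E) (L : List (Trade E)) : Prop :=
  ∀ (g : ℕ → E → ℝ) (g' : E → ℝ), (∀ n, SuperReplicable μ L (g n)) →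
    (∀ᵐ x ∂μ, Tendsto (fun n => g n x) atTop (𝓝 (g' x))) → SuperReplicable μ L g'

lemma NoArbitrage.mono (hNA : NoArbitrage μ L') (hL : L ⊆ L') : NoArbitrage μ L :=
  fun k hk => hNA k (tradeGains_mono hL hk)

namespace SuperReplicable

variable {g g' c : E → ℝ}

lemma mono (hg : SuperReplicable μ L g') (hle : g ≤ᵐ[μ] g') : SuperReplicable μ L g :=
  let ⟨k, hk, hgk⟩ := hg
  ⟨k, hk, hle.trans hgk⟩

lemma add (hg : SuperReplicable μ L g) (hg' : SuperReplicable μ L g') :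
    SuperReplicable μ L (g + g') :=
  let ⟨k, hk, hgk⟩ := hg
  let ⟨k', hk', hgk'⟩ := hg'
  ⟨k + k', add_mem hk hk', hgk.add_le_add hgk'⟩

lemma mul (hg : SuperReplicable μ L g) (hc : Measurable[G] c) (hL : ∀ p ∈ L, G ≤ p.info)
    (hc0 : 0 ≤ c) : SuperReplicable μ L (c * g) := by
  obtain ⟨k, hk, hgk⟩ := hg
  refine ⟨c * k, mul_mem_tradeGains_of_mem hc hL hk, ?_⟩
  filter_upwards [hgk] with x hx
  exact mul_le_mul_of_nonneg_left hx (hc0 x)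

lemma paste {g : ℕ → E → ℝ} (hg : ∀ n, SuperReplicable μ L (g n)) {τ : E → ℕ}
    (hτ : Measurable[G] τ) (hL : ∀ p ∈ L, G ≤ p.info) :
    SuperReplicable μ L fun x => g (τ x) x := by
  choose k hk hgk using hg
  refine ⟨_, tradeGains_paste hτ hL hk, ?_⟩
  filter_upwards [ae_all_iff.2 hgk] with x hx
  exact hx (τ x)

end SuperReplicable

lemma superReplicable_cons {g : E → ℝ} :
    SuperReplicable μ (p :: L) g ↔
      ∃ h : E → ℝ, Measurable[p.info] h ∧ SuperReplicable μ L (g - h * p.payoff) := by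
  constructor
  · rintro ⟨_, hgain, hgk⟩
    obtain ⟨h, hh, k, hk, rfl⟩ := mem_tradeGains_cons.1 hgain
    refine ⟨h, hh, k, hk, ?_⟩
    filter_upwards [hgk] with x hx
    exact sub_left_le_of_le_add hx
  · rintro ⟨h, hh, k, hk, hgk⟩
    refine ⟨_, mem_tradeGains_cons.2 ⟨h, hh, k, hk, rfl⟩, ?_⟩
    filter_upwards [hgk] with x hx
    exact le_add_of_sub_left_le hx

end Trades

section Closedness

variable {E : Type*}

lemma exists_measurable_random_subseq [MeasurableSpace E] {u : ℕ → E → ℝ}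
    (hu : ∀ n, Measurable (u n)) {C : E → ℝ} (hC : ∀ n x, |u n x| ≤ C x) :
    ∃ (v : E → ℝ) (τ : ℕ → E → ℕ), Measurable v ∧ (∀ k, Measurable (τ k)) ∧
      (∀ x, Tendsto (fun k => τ k x) atTop atTop) ∧
      ∀ x, Tendsto (fun k => u (τ k x) x) atTop (𝓝 (v x)) := by
  classical
  let v : E → ℝ := fun x => limsup (fun n => u n x) atTop
  have hv : Measurable v := Measurable.limsup hu
  have near_limsup (k : ℕ) (x : E) : ∃ n, k ≤ n ∧ |u n x - v x| < 1 / ((k : ℝ) + 1) := by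
    have hε : 0 < 1 / ((k : ℝ) + 1) := Nat.one_div_pos_of_nat
    have hbdd : IsBoundedUnder (· ≤ ·) atTop fun n => u n x :=
      isBoundedUnder_of ⟨C x, fun n => (abs_le.1 (hC n x)).2⟩
    have hcob : IsCoboundedUnder (· ≤ ·) atTop fun n => u n x :=
      (isBoundedUnder_of ⟨-C x, fun n => (abs_le.1 (hC n x)).1⟩ :
        IsBoundedUnder (· ≥ ·) atTop fun n => u n x).isCoboundedUnder_le
    have above : ∃ᶠ n in atTop, v x - 1 / ((k : ℝ) + 1) < u n x :=
      frequently_lt_of_lt_limsup hcob (sub_lt_self _ hε)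
    have below : ∀ᶠ n in atTop, u n x < v x + 1 / ((k : ℝ) + 1) :=
      eventually_lt_of_limsup_lt (lt_add_of_pos_right _ hε) hbdd
    obtain ⟨n, hlt, hgt, hkn⟩ := (above.and_eventually (below.and (eventually_ge_atTop k))).exists
    exact ⟨n, hkn, abs_lt.2 ⟨by linarith, by linarith⟩⟩
  refine ⟨v, fun k x => Nat.find (near_limsup k x), hv, fun k => ?_, fun x => ?_, fun x => ?_⟩
  · exact measurable_find (near_limsup k) fun n =>
      (MeasurableSet.const _).inter (measurableSet_lt ((hu n).sub hv).abs measurable_const)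
  · exact tendsto_atTop_mono (fun k => (Nat.find_spec (near_limsup k x)).1) tendsto_id
  · rw [tendsto_iff_dist_tendsto_zero]
    exact squeeze_zero (fun _ => dist_nonneg) (fun k => (Nat.find_spec (near_limsup k x)).2.le)
      tendsto_one_div_add_atTop_nhds_zero_nat

/- Here `b` is the indicator of `{|u| = 1}` and, as `0⁻¹ = 0`, `w` vanishes there. -/
lemma exists_complementary_weights {G : MeasurableSpace E} {u : E → ℝ} (hu : Measurable[G] u)
    (hu1 : |u| ≤ 1) :
    ∃ w b : E → ℝ, Measurable[G] w ∧ Measurable[G] b ∧ 0 ≤ w ∧ 0 ≤ b ∧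
      w * (1 - |u|) + b = 1 ∧ b * |u| = b := by
  have hw : Measurable[G] (1 - |u|)⁻¹ := (measurable_const.sub hu.abs).inv
  refine ⟨(1 - |u|)⁻¹, 1 - (1 - |u|)⁻¹ * (1 - |u|), hw,
    measurable_const.sub (hw.mul (measurable_const.sub hu.abs)),
    fun x => inv_nonneg.2 (sub_nonneg.2 (hu1 x)), fun x => sub_nonneg.2 inv_mul_le_one,
    add_sub_cancel _ _, ?_⟩
  ext x
  by_cases hx : 1 - |u x| = 0
  · simp [← sub_eq_zero.1 hx]
  · simp [hx]

variable {L : List (Trade E)} {p : Trade E} {G : MeasurableSpace E} [MeasurableSpace E]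
  {μ : Measure E}

/- The positions `h n` may be unbounded, but after division by `1 + |h n|` they have cluster
points. -/
lemma SuperReplicationClosed.exists_normalized_limit (hcl : SuperReplicationClosed μ L)
    (hL : ∀ p ∈ L, G ≤ p.info) {D : E → ℝ} {g h : ℕ → E → ℝ} {g' : E → ℝ}
    (hh : ∀ n, Measurable[G] (h n)) (hg : ∀ n, SuperReplicable μ L (g n - h n * D))
    (hlim : ∀ᵐ x ∂μ, Tendsto (fun n => g n x) atTop (𝓝 (g' x))) :
    ∃ u : E → ℝ, Measurable[G] u ∧ |u| ≤ 1 ∧ SuperReplicable μ L ((1 - |u|) * g' - u * D) := by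
  let s : ℕ → E → ℝ := fun n x => (1 + |h n x|)⁻¹
  have hs_meas (n) : Measurable[G] (s n) := by
    let := G
    exact ((hh n).abs.const_add 1).inv
  have hsh_meas (n) : Measurable[G] (s n * h n) := by
    let := G
    exact (hs_meas n).mul (hh n)
  have hs_nonneg (n) : 0 ≤ s n := fun x => by positivity
  have abs_normalized (n x) : |s n x * h n x| = 1 - s n x := by
    have hpos : 0 < 1 + |h n x| := by positivity
    rw [abs_mul, abs_of_nonneg (hs_nonneg n x)]
    refine eq_sub_of_add_eq ?_
    rw [← mul_add_one, add_comm, inv_mul_cancel₀ hpos.ne']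
  obtain ⟨u, τ, hu, hτ, hτ_top, hτu⟩ := @exists_measurable_random_subseq E G
    (fun n => s n * h n) hsh_meas (fun _ => 1)
    fun n x => (abs_normalized n x).trans_le (sub_le_self 1 (hs_nonneg n x))
  have hs_lim (x) : Tendsto (fun k => s (τ k x) x) atTop (𝓝 (1 - |u x|)) := by
    refine ((hτu x).abs.const_sub 1).congr fun k => ?_
    rw [Pi.mul_apply, abs_normalized, sub_sub_cancel]
  refine ⟨u, hu, fun x => sub_nonneg.1 (ge_of_tendsto' (hs_lim x) fun k => hs_nonneg _ x), ?_⟩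
  refine hcl _ _ (fun k => SuperReplicable.paste
    (fun n => (hg n).mul (hs_meas n) hL (hs_nonneg n)) (hτ k) hL) ?_
  filter_upwards [hlim] with x hx
  refine (((hs_lim x).mul (hx.comp (hτ_top x))).sub ((hτu x).mul_const (D x))).congr fun k => ?_
  simp only [Pi.mul_apply, Pi.sub_apply, Function.comp_apply]
  ring

/- By no arbitrage, a gain dominating `-(v * p.payoff)` equals it. -/
lemma NoArbitrage.superReplicable_mul_payoff (hNA : NoArbitrage μ (p :: L))
    (hL : ∀ q ∈ L, p.info ≤ q.info) {v c : E → ℝ} (hv : Measurable[p.info] v)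
    (hvp : SuperReplicable μ L (-(v * p.payoff))) (hc : Measurable[p.info] c) :
    SuperReplicable μ L (c * (v * p.payoff)) := by
  obtain ⟨k, hk, hle⟩ := hvp
  have hzero : v * p.payoff + k =ᵐ[μ] 0 := by
    refine hNA _ (mem_tradeGains_cons.2 ⟨v, hv, k, hk, rfl⟩) ?_
    filter_upwards [hle] with x hx
    exact neg_le_iff_add_nonneg'.1 hx
  refine ⟨-(c * k), neg_mem (mul_mem_tradeGains_of_mem hc hL hk), ?_⟩
  filter_upwards [hzero] with x hx
  simp only [Pi.mul_apply, Pi.neg_apply, eq_neg_of_add_eq_zero_left hx, mul_neg, le_refl]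

lemma SuperReplicationClosed.cons (hcl : SuperReplicationClosed μ L)
    (hL : ∀ q ∈ L, p.info ≤ q.info) (hNA : NoArbitrage μ (p :: L)) :
    SuperReplicationClosed μ (p :: L) := by
  intro g g' hg hlim
  choose h hh hgh using fun n => superReplicable_cons.1 (hg n)
  obtain ⟨u, hu, hu1, hlimit⟩ := hcl.exists_normalized_limit hL hh hgh hlim
  obtain ⟨w, b, hw, hb, hw0, hb0, hwb, b_mul_abs⟩ := exists_complementary_weights hu hu1
  have b_mul_sq : b * (u * u) = b := by
    have abs_mul_abs : |u| * |u| = u * u := funext fun x => abs_mul_abs_self (u x)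
    rw [← abs_mul_abs, ← mul_assoc, b_mul_abs, b_mul_abs]
  have hflat : SuperReplicable μ L (-((b * u) * p.payoff)) := by
    convert hlimit.mul hb hL hb0 using 1
    linear_combination g' * b_mul_abs
  have hb_lim : SuperReplicable μ L (b * g') := by
    refine hcl (fun n => b * g n) _ (fun n => ?_) ?_
    · have hhu : Measurable[p.info] (h n * u) := by
        let := p.info
        exact (hh n).mul hu
      have hbu : Measurable[p.info] (b * u) := by
        let := p.info
        exact hb.mul hu
      convert ((hgh n).mul hb hL hb0).add
        (hNA.superReplicable_mul_payoff hL hbu hflat hhu) using 1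
      linear_combination -(h n * p.payoff) * b_mul_sq
    · filter_upwards [hlim] with x hx
      exact hx.const_mul _
  refine superReplicable_cons.2 ⟨w * u, ?_, ?_⟩
  · let := p.info
    exact hw.mul hu
  · convert (hlimit.mul hw hL hw0).add hb_lim using 1
    linear_combination -g' * hwb

theorem NoArbitrage.superReplicationClosed (hL : IsNested L) (hNA : NoArbitrage μ L) :
    SuperReplicationClosed μ L := by
  induction L with
  | nil =>
    intro g g' hg hlim
    have hg_nonpos (n) : g n ≤ᵐ[μ] 0 := by
      obtain ⟨k, hk, hgk⟩ := hg n
      rwa [mem_tradeGains_nil.1 hk] at hgk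
    refine ⟨0, zero_mem _, ?_⟩
    filter_upwards [ae_all_iff.2 hg_nonpos, hlim] with x hx hl
    exact le_of_tendsto' hl hx
  | cons p L ih =>
    obtain ⟨hpL, hL⟩ := List.pairwise_cons.1 hL
    exact (ih hL (hNA.mono (List.subset_cons_self p L))).cons hpL hNA

end Closedness

section PricingMeasures

lemma abs_indicator_setOf_abs_le {E : Type*} {h : E → ℝ} {c : ℝ} (hc : 0 ≤ c) (x : E) :
    |{x | |h x| ≤ c}.indicator h x| ≤ c := by
  by_cases hx : |h x| ≤ c <;> simp [hx, hc]

variable {E : Type*} {G : MeasurableSpace E} [m : MeasurableSpace E] {Q : Measure E}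

/-- All trades in `L` are integrable and conditionally centred given their information. -/
def IsPricingMeasure (Q : Measure E) (L : List (Trade E)) : Prop :=
  ∀ p ∈ L, p.info ≤ m ∧ Integrable p.payoff Q ∧ Q[p.payoff | p.info] =ᵐ[Q] 0

lemma integral_mul_eq_zero_of_condExp_eq_zero (hG : G ≤ m) [SigmaFinite (Q.trim hG)]
    {D h : E → ℝ} (hD : Integrable D Q) (hD0 : Q[D | G] =ᵐ[Q] 0) (hh : Measurable[G] h) {C : ℝ}
    (hC : ∀ x, |h x| ≤ C) : Integrable (h * D) Q ∧ ∫ x, (h * D) x ∂Q = 0 := by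
  have hint : Integrable (h * D) Q :=
    hD.bdd_mul (hh.mono hG le_rfl).aestronglyMeasurable (ae_of_all _ hC)
  refine ⟨hint, ?_⟩
  rw [← integral_condExp hG]
  refine integral_eq_zero_of_ae
    ((condExp_mul_of_stronglyMeasurable_left hh.stronglyMeasurable hint hD).trans ?_)
  filter_upwards [hD0] with x hx
  simp [hx]

lemma integrable_and_integral_eq_of_aecover {ι : Type*} {l : Filter ι} [l.NeBot]
    [l.IsCountablyGenerated] {A : ι → Set E} (hA : AECover Q l A) {k w : E → ℝ} {c : ℝ}
    (hw : Integrable w Q) (hwk : w ≤ᵐ[Q] k) (hk : ∀ i, IntegrableOn k (A i) Q)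
    (hc : ∀ i, ∫ x in A i, k x ∂Q = c) : Integrable k Q ∧ ∫ x, k x ∂Q = c := by
  have habs : Integrable (k + |w|) Q := by
    refine hA.integrable_of_integral_bounded_of_nonneg_ae (c + ∫ x, |w x| ∂Q)
      (fun i => (hk i).add hw.abs.integrableOn) ?_ (Eventually.of_forall fun i => ?_)
    · filter_upwards [hwk] with x hx
      exact neg_le_iff_add_nonneg.1 ((neg_abs_le (w x)).trans hx)
    · simp only [Pi.add_apply, Pi.abs_apply]
      rw [integral_add (hk i) hw.abs.integrableOn, hc]
      exact add_le_add_right (setIntegral_le_integral hw.abs (ae_of_all _ fun _ => abs_nonneg _)) c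
  have hint : Integrable k Q := add_sub_cancel_right k |w| ▸ habs.sub hw.abs
  refine ⟨hint, tendsto_nhds_unique (hA.integral_tendsto_of_countably_generated hint) ?_⟩
  simp only [hc, tendsto_const_nhds]

lemma aecover_setOf_abs_le {h : E → ℝ} (hh : Measurable h) :
    AECover Q atTop fun n : ℕ => {x | |h x| ≤ n} where
  ae_eventually_mem := ae_of_all _ fun x =>
    (tendsto_natCast_atTop_atTop (R := ℝ)).eventually_ge_atTop |h x|
  measurableSet _ := measurableSet_le hh.abs measurable_const

theorem IsPricingMeasure.integral_eq_zero [IsFiniteMeasure Q] {L : List (Trade E)}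
    (hQ : IsPricingMeasure Q L) (hL : IsNested L) {k w : E → ℝ} (hk : k ∈ tradeGains L)
    (hw : Integrable w Q) (hwk : w ≤ᵐ[Q] k) : Integrable k Q ∧ ∫ x, k x ∂Q = 0 := by
  induction L generalizing k w with
  | nil =>
    rw [mem_tradeGains_nil.1 hk]
    exact ⟨integrable_zero _ _ _, integral_zero _ _⟩
  | cons p L ih =>
    obtain ⟨hpL, hL⟩ := List.pairwise_cons.1 hL
    obtain ⟨⟨hG, hD, hD0⟩, hQL⟩ := List.forall_mem_cons.1 hQ
    obtain ⟨h, hh, r, hr, rfl⟩ := mem_tradeGains_cons.1 hk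
    let A : ℕ → Set E := fun n => {x | |h x| ≤ n}
    have hA (n) : MeasurableSet[p.info] (A n) := by
      let := p.info
      exact measurableSet_le hh.abs measurable_const
    have first_trade (n) := integral_mul_eq_zero_of_condExp_eq_zero hG hD hD0
      (hh.indicator (hA n)) fun x => abs_indicator_setOf_abs_le n.cast_nonneg x
    have hrA_mem (n) : (A n).indicator 1 * r ∈ tradeGains L :=
      mul_mem_tradeGains_of_mem (Measurable.indicator (@measurable_one _ E _ p.info _) (hA n))
        hpL hr
    have other_trades (n) := ih hQL hL (hrA_mem n)
      ((hw.indicator (hG _ (hA n))).sub (first_trade n).1) (by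
        filter_upwards [hwk] with x hx
        by_cases hxA : x ∈ A n
        · simpa [hxA, add_comm] using hx
        · simp [hxA])
    have split (n) : (A n).indicator (h * p.payoff + r)
        = (A n).indicator h * p.payoff + (A n).indicator 1 * r := by
      ext x
      by_cases hx : x ∈ A n <;> simp [hx]
    refine integrable_and_integral_eq_of_aecover
      (aecover_setOf_abs_le (hh.mono hG le_rfl)) hw hwk (fun n => ?_) fun n => ?_
    · rw [← integrable_indicator_iff (hG _ (hA n)), split]
      exact (first_trade n).1.add (other_trades n).1
    · rw [← integral_indicator (hG _ (hA n)), split]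
      simp only [Pi.add_apply]
      rw [integral_add (first_trade n).1 (other_trades n).1, (first_trade n).2,
        (other_trades n).2, add_zero]

lemma IsPricingMeasure.noArbitrage [IsFiniteMeasure Q] {L : List (Trade E)}
    (hQ : IsPricingMeasure Q L) (hL : IsNested L) : NoArbitrage Q L := by
  intro k hk hk0
  obtain ⟨hint, hzero⟩ := hQ.integral_eq_zero hL hk (integrable_zero _ _ _) hk0
  exact (integral_eq_zero_iff_of_nonneg_ae hk0 hint).1 hzero

end PricingMeasures

section ConesOfFunctions

lemma exists_forall_sub_smul_mem {V : Type*} [NormedAddCommGroup V] [NormedSpace ℝ V]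
    [CompleteSpace V] (C : ProperCone ℝ V) {z : ℕ → V} (hz : ∀ n, z n ∈ C) :
    ∃ y ∈ C, ∀ n, ∃ a : ℝ, 0 < a ∧ y - a • z n ∈ C := by
  let a : ℕ → ℝ := fun n => (1 / 2) ^ n / (1 + ‖z n‖)
  have ha (n) : 0 < a n := by positivity
  have hmem (n) : a n • z n ∈ C := C.smul_mem (hz n) (ha n).le
  have hsum : Summable fun n => a n • z n := by
    refine Summable.of_norm_bounded summable_geometric_two fun n => ?_
    rw [norm_smul, Real.norm_of_nonneg (ha n).le, div_mul_eq_mul_div]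
    refine div_le_of_le_mul₀ (by positivity) (by positivity) ?_
    gcongr
    exact le_add_of_nonneg_left zero_le_one
  refine ⟨∑' n, a n • z n, tsum_mem C.isClosed hmem, fun n => ⟨a n, ha n, ?_⟩⟩
  rw [hsum.tsum_eq_add_tsum_ite n, add_sub_cancel_left]
  refine tsum_mem C.isClosed fun i => ?_
  split_ifs
  exacts [zero_mem C, hmem i]

variable {E : Type*} [MeasurableSpace E] {μ : Measure E} {p : ENNReal} [Fact (1 ≤ p)]
  {C : ProperCone ℝ (Lp ℝ p μ)}

lemma exists_mem_forall_ae_pos_of_pos (hC : ∀ z ∈ C, 0 ≤ z) {z : ℕ → Lp ℝ p μ}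
    (hz : ∀ n, z n ∈ C) : ∃ y ∈ C, ∀ n, ∀ᵐ x ∂μ, 0 < z n x → 0 < y x := by
  obtain ⟨y, hy, hyz⟩ := exists_forall_sub_smul_mem C hz
  refine ⟨y, hy, fun n => ?_⟩
  obtain ⟨a, ha, hya⟩ := hyz n
  filter_upwards [(Lp.coeFn_le _ _).2 (sub_nonneg.1 (hC _ hya)), Lp.coeFn_smul a (z n)]
    with x hx hsmul hpos
  rw [hsmul] at hx
  exact (mul_pos ha hpos).trans_le hx

variable [IsFiniteMeasure μ]

lemma exists_mem_maximal_support (hC : ∀ z ∈ C, 0 ≤ z) :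
    ∃ y ∈ C, ∀ z ∈ C, ∀ᵐ x ∂μ, 0 < z x → 0 < y x := by
  obtain ⟨_, -, hlim, hmem⟩ := exists_seq_tendsto_sSup
    (S := (fun z : Lp ℝ p μ => μ {x | 0 < z x}) '' C) ⟨_, 0, zero_mem C, rfl⟩ (OrderTop.bddAbove _)
  choose z hz hzμ using hmem
  obtain ⟨y, hy, hyz⟩ := exists_mem_forall_ae_pos_of_pos hC hz
  have hmax {z'} (hz' : z' ∈ C) : μ {x | 0 < z' x} ≤ μ {x | 0 < y x} :=
    (le_sSup (Set.mem_image_of_mem _ hz')).trans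
      (le_of_tendsto' hlim fun n => hzμ n ▸ measure_mono_ae (hyz n))
  refine ⟨y, hy, fun z' hz' => ?_⟩
  have hsum := Lp.coeFn_add y z'
  have hy_nonneg := (Lp.coeFn_nonneg y).2 (hC y hy)
  have hz'_nonneg := (Lp.coeFn_nonneg z').2 (hC z' hz')
  have hsub : {x | 0 < y x} ≤ᵐ[μ] {x | 0 < (y + z' : Lp ℝ p μ) x} := by
    filter_upwards [hsum, hz'_nonneg] with x hx hx' hpos
    exact (add_pos_of_pos_of_nonneg hpos hx').trans_eq hx.symm
  have hsupp := ae_eq_of_ae_subset_of_measure_ge hsub (hmax (add_mem hy hz'))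
    (measurableSet_lt measurable_const (Lp.stronglyMeasurable y).measurable).nullMeasurableSet
    (measure_ne_top _ _)
  filter_upwards [hsum, hy_nonneg, hsupp.mem_iff] with x hx hx' hiff hpos
  exact hiff.2 ((add_pos_of_nonneg_of_pos hx' hpos).trans_eq hx.symm)

theorem exists_mem_ae_pos (hC : ∀ z ∈ C, 0 ≤ z)
    (hcharge : ∀ B, MeasurableSet B → μ B ≠ 0 → ∃ z ∈ C, ∫ x in B, z x ∂μ ≠ 0) :
    ∃ z ∈ C, ∀ᵐ x ∂μ, 0 < z x := by
  obtain ⟨y, hy, hmax⟩ := exists_mem_maximal_support hC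
  refine ⟨y, hy, ?_⟩
  by_contra hnull
  obtain ⟨z, hz, hne⟩ := hcharge {x | ¬ 0 < y x}
    (measurableSet_lt measurable_const (Lp.stronglyMeasurable y).measurable).compl hnull
  refine hne (setIntegral_eq_zero_of_ae_eq_zero ?_)
  filter_upwards [hmax z hz, (Lp.coeFn_nonneg z).2 (hC z hz)] with x hx hz0 hxB
  exact le_antisymm (not_lt.1 fun hpos => hxB (hx hpos)) hz0

end ConesOfFunctions

section PricingDensities

variable {E : Type*} [m : MeasurableSpace E] {μ ν : Measure E} {L : List (Trade E)}

/-- The square-integrable functionals which are nonnegative on every claim that is bounded below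
by a gain of the trades in `L`. -/
noncomputable def pricingDensities (μ : Measure E) (L : List (Trade E)) :
    ProperCone ℝ (Lp ℝ 2 μ) :=
  ProperCone.innerDual {c | SuperReplicable μ L (-⇑c)}

lemma pricingDensities_nonneg [IsFiniteMeasure μ] {z : Lp ℝ 2 μ} (hz : z ∈ pricingDensities μ L) :
    0 ≤ z := by
  refine (Lp.coeFn_nonneg z).1 (ae_nonneg_of_forall_setIntegral_nonneg
    ((Lp.memLp z).integrable one_le_two) fun s hs hμs => ?_)
  rw [← L2.inner_indicatorConstLp_one hs hμs.ne z]
  refine ProperCone.mem_innerDual.1 hz ⟨0, zero_mem _, ?_⟩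
  filter_upwards [indicatorConstLp_coeFn (p := 2) (hs := hs) (hμs := hμs.ne) (c := (1 : ℝ))]
    with x hx
  rw [Pi.neg_apply, hx]
  exact neg_nonpos.2 (Set.indicator_nonneg (fun _ _ => zero_le_one) x)

lemma inner_toLp_eq_zero_of_mem_tradeGains {z : Lp ℝ 2 μ} (hz : z ∈ pricingDensities μ L)
    {k : E → ℝ} (hk : k ∈ tradeGains L) (hk2 : MemLp k 2 μ) : inner ℝ (hk2.toLp k) z = 0 := by
  have inner_nonneg {k : E → ℝ} (hk : k ∈ tradeGains L) (hk2 : MemLp k 2 μ) :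
      0 ≤ inner ℝ (hk2.toLp k) z :=
    ProperCone.mem_innerDual.1 hz ⟨-k, neg_mem hk, hk2.coeFn_toLp.neg.le⟩
  have inner_nonpos := inner_nonneg (neg_mem hk) hk2.neg
  rw [MemLp.toLp_neg hk2, inner_neg_left] at inner_nonpos
  exact le_antisymm (neg_nonneg.1 inner_nonpos) (inner_nonneg hk hk2)

lemma SuperReplicationClosed.exists_pricingDensity_inner_pos (hcl : SuperReplicationClosed μ L)
    {g : Lp ℝ 2 μ} (hg : ¬ SuperReplicable μ L g) :
    ∃ z ∈ pricingDensities μ L, 0 < inner ℝ g z := by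
  let C : ProperCone ℝ (Lp ℝ 2 μ) :=
    { carrier := {c | SuperReplicable μ L (-⇑c)}
      add_mem' {c c'} hc hc' := (hc.add hc').mono <| by
        filter_upwards [Lp.coeFn_add c c'] with x hx
        simp only [Pi.neg_apply, Pi.add_apply, hx]
        rw [neg_add]
      zero_mem' := ⟨0, zero_mem _, by
        filter_upwards [Lp.coeFn_zero ℝ 2 μ] with x hx
        change -(0 : Lp ℝ 2 μ) x ≤ 0
        rw [hx, Pi.zero_apply, neg_zero]⟩
      smul_mem' a c hc := (hc.mul (G := ⊥) (c := fun _ => a) measurable_const (fun _ _ => bot_le)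
        fun _ => a.2).mono <| by
        filter_upwards [Lp.coeFn_smul (a : ℝ) c] with x hx
        change -((a : ℝ) • c : Lp ℝ 2 μ) x ≤ a * -c x
        rw [hx, Pi.smul_apply, smul_eq_mul, mul_neg]
      isClosed' := by
        refine IsSeqClosed.isClosed fun c c' hc hlim => ?_
        obtain ⟨ns, -, hns⟩ := (tendstoInMeasure_of_tendsto_Lp hlim).exists_seq_tendsto_ae
        exact hcl _ _ (fun n => hc (ns n)) (hns.mono fun x hx => hx.neg) }
  obtain ⟨z, hz, hgz⟩ := C.hyperplane_separation' (x₀ := -g) fun hmem =>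
    hg (SuperReplicable.mono hmem <| by
      filter_upwards [Lp.coeFn_neg g] with x hx
      rw [Pi.neg_apply, hx, Pi.neg_apply, neg_neg])
  exact ⟨z, ProperCone.mem_innerDual.2 hz, by rwa [inner_neg_left, neg_lt_zero] at hgz⟩

lemma SuperReplicationClosed.exists_pricingDensity_ae_pos [IsFiniteMeasure μ]
    (hcl : SuperReplicationClosed μ L) (hNA : NoArbitrage μ L) :
    ∃ z ∈ pricingDensities μ L, ∀ᵐ x ∂μ, 0 < z x := by
  refine exists_mem_ae_pos (fun z => pricingDensities_nonneg) fun B hB hμB => ?_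
  have hone : (indicatorConstLp 2 hB (measure_ne_top μ B) (1 : ℝ) : E → ℝ)
      =ᵐ[μ] B.indicator fun _ => 1 := indicatorConstLp_coeFn
  obtain ⟨z, hz, hpos⟩ := hcl.exists_pricingDensity_inner_pos
    (g := indicatorConstLp 2 hB (measure_ne_top μ B) (1 : ℝ)) <| by
      rintro ⟨k, hk, hle⟩
      have hk_ge : B.indicator (fun _ => 1) ≤ᵐ[μ] k := hone.symm.le.trans hle
      have hk_zero : k =ᵐ[μ] 0 := hNA k hk <| by
        filter_upwards [hk_ge] with x hx
        exact (Set.indicator_nonneg (fun _ _ => zero_le_one) x).trans hx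
      refine hμB (measure_eq_zero_iff_ae_notMem.2 ?_)
      filter_upwards [hk_ge, hk_zero] with x hx hx0 hxB
      rw [hx0, Set.indicator_of_mem hxB] at hx
      exact zero_lt_one.not_ge hx
  rw [L2.inner_indicatorConstLp_one hB] at hpos
  exact ⟨z, hz, hpos.ne'⟩

lemma exists_pricingDensity_ae_pos_and_inner_pos [IsFiniteMeasure μ] (hL : IsNested L)
    (hNA : NoArbitrage μ L) (g : Lp ℝ 2 μ) :
    ∃ z ∈ pricingDensities μ L, (∀ᵐ x ∂μ, 0 < z x) ∧
      (SuperReplicable μ L g ∨ 0 < inner ℝ g z) := by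
  have hcl := hNA.superReplicationClosed hL
  obtain ⟨z, hz, hz_pos⟩ := hcl.exists_pricingDensity_ae_pos hNA
  by_cases hg : SuperReplicable μ L g
  · exact ⟨z, hz, hz_pos, .inl hg⟩
  obtain ⟨y, hy, hgy⟩ := hcl.exists_pricingDensity_inner_pos hg
  obtain ⟨n, hn⟩ := exists_nat_gt (-inner ℝ g z / inner ℝ g y)
  have hny : (n : ℝ) • y ∈ pricingDensities μ L := ProperCone.smul_mem _ hy n.cast_nonneg
  refine ⟨z + (n : ℝ) • y, add_mem hz hny, ?_, .inr ?_⟩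
  · filter_upwards [hz_pos, (Lp.coeFn_nonneg _).2 (pricingDensities_nonneg hny),
      Lp.coeFn_add z ((n : ℝ) • y)] with x hzx hyx hx
    exact (add_pos_of_pos_of_nonneg hzx hyx).trans_eq hx.symm
  · rw [div_lt_iff₀ hgy] at hn
    rw [inner_add_right, inner_smul_right]
    linarith

lemma integrable_withDensity_and_integral_eq_inner {z : Lp ℝ 2 μ} (hz : 0 ≤ z) {φ : E → ℝ}
    (hφ : MemLp φ 2 μ) :
    Integrable φ (μ.withDensity fun x => ENNReal.ofReal (z x)) ∧
      ∫ x, φ x ∂μ.withDensity (fun x => ENNReal.ofReal (z x)) = inner ℝ (hφ.toLp φ) z := by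
  have hz_meas : AEMeasurable (fun x => ENNReal.ofReal (z x)) μ :=
    (Lp.stronglyMeasurable z).measurable.ennreal_ofReal.aemeasurable
  have hz_top : ∀ᵐ x ∂μ, ENNReal.ofReal (z x) < ⊤ := ae_of_all _ fun _ => ENNReal.ofReal_lt_top
  have hz_nonneg := (Lp.coeFn_nonneg z).2 hz
  constructor
  · rw [integrable_withDensity_iff_integrable_smul₀' hz_meas hz_top]
    refine ((Lp.memLp z).integrable_mul hφ).congr ?_
    filter_upwards [hz_nonneg] with x hx
    rw [ENNReal.toReal_ofReal hx, Pi.mul_apply, smul_eq_mul]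
  · rw [integral_withDensity_eq_integral_toReal_smul₀ hz_meas hz_top, L2.inner_def]
    refine integral_congr_ae ?_
    filter_upwards [hz_nonneg, hφ.coeFn_toLp] with x hx hφx
    rw [ENNReal.toReal_ofReal hx, hφx]
    rfl

lemma isPricingMeasure_withDensity [IsFiniteMeasure μ] {z : Lp ℝ 2 μ}
    (hz : z ∈ pricingDensities μ L) (hL : ∀ p ∈ L, p.info ≤ m ∧ MemLp p.payoff 2 μ) :
    IsPricingMeasure (μ.withDensity fun x => ENNReal.ofReal (z x)) L := by
  have : IsFiniteMeasure (μ.withDensity fun x => ENNReal.ofReal (z x)) :=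
    isFiniteMeasure_withDensity_ofReal ((Lp.memLp z).integrable one_le_two).2
  intro p hp
  obtain ⟨hG, hp2⟩ := hL p hp
  have hp_int := (integrable_withDensity_and_integral_eq_inner (pricingDensities_nonneg hz) hp2).1
  refine ⟨hG, hp_int, (ae_eq_condExp_of_forall_setIntegral_eq hG hp_int
    (fun _ _ _ => integrableOn_zero) (fun s hs _ => ?_) aestronglyMeasurable_zero).symm⟩
  have hs_gain : s.indicator p.payoff ∈ tradeGains L := by
    convert mul_mem_tradeGains hp (h := s.indicator 1)
      (Measurable.indicator (@measurable_one _ E _ p.info _) hs) using 1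
    ext x
    by_cases hx : x ∈ s <;> simp [hx]
  simp only [integral_zero]
  rw [← integral_indicator (hG s hs), (integrable_withDensity_and_integral_eq_inner
    (pricingDensities_nonneg hz) (hp2.indicator (hG s hs))).2,
    inner_toLp_eq_zero_of_mem_tradeGains hz hs_gain]

lemma exists_equivalent_memLp_two (μ : Measure E) {b : E → ℝ} (hb : Measurable b)
    [IsFiniteMeasure μ] : ∃ ν ≤ μ, μ ≪ ν ∧ MemLp b 2 ν := by
  have hpos (x) : 0 < (1 + b x ^ 2)⁻¹ := by positivity
  have hmeas : Measurable fun x => (1 + b x ^ 2)⁻¹ := ((hb.pow_const 2).const_add 1).inv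
  refine ⟨μ.withDensity fun x => ENNReal.ofReal (1 + b x ^ 2)⁻¹, ?_,
    withDensity_absolutelyContinuous' hmeas.ennreal_ofReal.aemeasurable
      (ae_of_all _ fun x => (ENNReal.ofReal_pos.2 (hpos x)).ne'), ?_⟩
  · refine (withDensity_mono (ae_of_all _ fun x => ?_)).trans_eq withDensity_one
    exact ENNReal.ofReal_le_one.2 (inv_le_one_of_one_le₀ (le_add_of_nonneg_right (sq_nonneg _)))
  · rw [memLp_two_iff_integrable_sq hb.aestronglyMeasurable,
      integrable_withDensity_iff_integrable_smul' hmeas.ennreal_ofReal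
        (ae_of_all _ fun _ => ENNReal.ofReal_lt_top)]
    refine Integrable.of_bound (by fun_prop) 1 (ae_of_all _ fun x => ?_)
    rw [ENNReal.toReal_ofReal (hpos x).le, smul_eq_mul, Real.norm_of_nonneg (by positivity),
      inv_mul_le_iff₀ (by positivity)]
    linarith

lemma exists_equivalent_forall_memLp_two (μ : Measure E) [IsFiniteMeasure μ]
    {l : List (E → ℝ)} (hl : ∀ b ∈ l, Measurable b) :
    ∃ ν ≤ μ, μ ≪ ν ∧ ∀ b ∈ l, MemLp b 2 ν := by
  induction l with
  | nil => exact ⟨μ, le_rfl, .rfl, by simp⟩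
  | cons b l ih =>
    obtain ⟨hb, hl⟩ := List.forall_mem_cons.1 hl
    obtain ⟨ν, hν, hμν, hlν⟩ := ih hl
    have : IsFiniteMeasure ν := isFiniteMeasure_of_le μ hν
    obtain ⟨ν', hν', hνν', hbν'⟩ := exists_equivalent_memLp_two ν hb
    exact ⟨ν', hν'.trans hν, hμν.trans hνν',
      List.forall_mem_cons.2 ⟨hbν', fun c hc => (hlν c hc).mono_measure hν'⟩⟩

lemma NoArbitrage.congr_measure (hNA : NoArbitrage μ L) (hνμ : ν ≪ μ) (hμν : μ ≪ ν) :
    NoArbitrage ν L :=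
  fun k hk hk0 => hνμ.ae_le (hNA k hk (hμν.ae_le hk0))

theorem exists_isPricingMeasure (μ : Measure E) [IsFiniteMeasure μ] (hL : IsNested L)
    (hLm : ∀ p ∈ L, p.info ≤ m ∧ Measurable p.payoff) (hNA : NoArbitrage μ L) {g : E → ℝ}
    (hg : Measurable g) :
    ∃ Q : Measure E, IsFiniteMeasure Q ∧ Q ≪ μ ∧ μ ≪ Q ∧ IsPricingMeasure Q L ∧
      Integrable g Q ∧ (SuperReplicable μ L g ∨ 0 < ∫ x, g x ∂Q) := by
  obtain ⟨ν, hνμ, hμν, hν⟩ := exists_equivalent_forall_memLp_two μ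
    (l := g :: L.map Trade.payoff) (by simpa [hg] using fun p hp => (hLm p hp).2)
  simp only [List.forall_mem_cons, List.forall_mem_map] at hν
  obtain ⟨hgν, hLν⟩ := hν
  have : IsFiniteMeasure ν := isFiniteMeasure_of_le μ hνμ
  obtain ⟨z, hz, hz_pos, hgz⟩ := exists_pricingDensity_ae_pos_and_inner_pos hL
    (hNA.congr_measure hνμ.absolutelyContinuous hμν) (hgν.toLp g)
  obtain ⟨hg_int, hg_integral⟩ :=
    integrable_withDensity_and_integral_eq_inner (pricingDensities_nonneg hz) hgν
  refine ⟨ν.withDensity fun x => ENNReal.ofReal (z x),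
    isFiniteMeasure_withDensity_ofReal ((Lp.memLp z).integrable one_le_two).2,
    (withDensity_absolutelyContinuous _ _).trans hνμ.absolutelyContinuous,
    hμν.trans (withDensity_absolutelyContinuous'
      (Lp.stronglyMeasurable z).measurable.ennreal_ofReal.aemeasurable ?_),
    isPricingMeasure_withDensity hz fun p hp => ⟨(hLm p hp).1, hLν p hp⟩, hg_int,
    hgz.imp (fun ⟨k, hk, hgk⟩ => ⟨k, hk, hμν.ae_le (hgν.coeFn_toLp.symm.le.trans hgk)⟩)
      hg_integral.symm.subst⟩
  filter_upwards [hz_pos] with x hx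
  exact (ENNReal.ofReal_pos.2 hx).ne'

end PricingDensities

section Stacking

variable {Ω ι : Type*} {G G' : ι → MeasurableSpace Ω}

/-- A family of random variables as one function on the disjoint union of copies of `Ω`. -/
abbrev stack (f : ι → Ω → ℝ) (x : Σ _ : ι, Ω) : ℝ := f x.1 x.2

/-- The σ-algebra on the disjoint union of copies of `Ω` which is `G i` on the `i`-th copy. -/
@[reducible]
def stackSpace (G : ι → MeasurableSpace Ω) : MeasurableSpace (Σ _ : ι, Ω) :=
  ⨅ i, (G i).map (Sigma.mk i)

lemma measurableSet_stackSpace {s : Set (Σ _ : ι, Ω)} :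
    MeasurableSet[stackSpace G] s ↔
      ∀ i, MeasurableSet[G i] ((fun ω => (⟨i, ω⟩ : Σ _ : ι, Ω)) ⁻¹' s) :=
  MeasurableSpace.measurableSet_iInf

lemma measurable_stackSpace {h : (Σ _ : ι, Ω) → ℝ} :
    Measurable[stackSpace G] h ↔ ∀ i, Measurable[G i] fun ω => h ⟨i, ω⟩ :=
  ⟨fun hh i _ hs => measurableSet_stackSpace.1 (hh hs) i,
    fun hh _ hs => measurableSet_stackSpace.2 fun i => hh i hs⟩

lemma stackSpace_mono (h : ∀ i, G i ≤ G' i) : stackSpace G ≤ stackSpace G' := fun _ hs =>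
  measurableSet_stackSpace.2 fun i => h i _ (measurableSet_stackSpace.1 hs i)

variable [m0 : MeasurableSpace Ω]

lemma stackSpace_le (h : ∀ i, G i ≤ m0) : stackSpace G ≤ Sigma.instMeasurableSpace :=
  stackSpace_mono (G' := fun _ => m0) h

lemma measurableEmbedding_sigmaMk (i : ι) :
    MeasurableEmbedding (Sigma.mk (β := fun _ : ι => Ω) i) where
  injective := sigma_mk_injective
  measurable _ hs := (measurableSet_stackSpace (G := fun _ => m0)).1 hs i
  measurableSet_image' s hs := (measurableSet_stackSpace (G := fun _ => m0)).2 fun j => by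
    rcases eq_or_ne i j with rfl | hij
    · exact (Set.preimage_image_eq s (sigma_mk_injective (β := fun _ : ι => Ω))).symm ▸ hs
    · convert MeasurableSet.empty
      ext ω
      simp [hij]

variable [Fintype ι] {P : Measure Ω}

variable (ι P) in
/-- The sum of the copies of the measure `P` on the summands of the disjoint union. -/
noncomputable def stackMeasure : Measure (Σ _ : ι, Ω) :=
  ∑ i, P.map (Sigma.mk i)

instance [IsFiniteMeasure P] : IsFiniteMeasure (stackMeasure ι P) := by
  unfold stackMeasure
  infer_instance

lemma ae_stackMeasure {p : (Σ _ : ι, Ω) → Prop} :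
    (∀ᵐ x ∂stackMeasure ι P, p x) ↔ ∀ i, ∀ᵐ ω ∂P, p ⟨i, ω⟩ := by
  rw [stackMeasure, ← Measure.sum_fintype, Measure.ae_sum_iff]
  exact forall_congr' fun i => (measurableEmbedding_sigmaMk i).ae_map_iff

end Stacking

section CollectiveTrades

variable {Ω E : Type*} {J N R T : ℕ}

/-- The trades which buy an asset with price process in `l` at a time `s < T` and sell it at
time `s + 1`. -/
def dynamicTrades (F : ℕ → MeasurableSpace E) (T : ℕ) (l : List (ℕ → E → ℝ)) : List (Trade E) :=
  (List.range T).flatMap fun s => l.map fun W => ⟨F s, W (s + 1) - W s⟩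

/-- The deterministic multiples of the exchanges in `spanExch Ys`. The zero-sum exchanges are
generated by the vectors in which one agent receives a unit to which all agents contribute
equally. -/
noncomputable def exchangeTrades (Ys : Fin R → Fin N → Ω → ℝ) : List (Trade (Σ _ : Fin N, Ω)) :=
  (List.finRange N).map (fun i => ⟨⊥, fun x => (if x.1 = i then 1 else 0) - (N : ℝ)⁻¹⟩) ++
    (List.finRange R).map fun r => ⟨⊥, stack (Ys r)⟩

/-- All trades of the collective market in which the processes in `l` are traded. -/
noncomputable def collectiveTrades (F : Fin N → ℕ → MeasurableSpace Ω) (T : ℕ)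
    (Ys : Fin R → Fin N → Ω → ℝ) (l : List (ℕ → (Σ _ : Fin N, Ω) → ℝ)) :
    List (Trade (Σ _ : Fin N, Ω)) :=
  exchangeTrades Ys ++ dynamicTrades (fun t => stackSpace fun i => F i t) T l

/-- The price processes available to the agents, an asset being worthless to an agent who does
not trade it. -/
noncomputable def stackedAssets (assets : Fin N → Finset (Fin J)) (X : Fin J → ℕ → Ω → ℝ) :
    List (ℕ → (Σ _ : Fin N, Ω) → ℝ) :=
  (List.finRange J).map fun j t => stack fun i => if j ∈ assets i then X j t else 0

lemma mem_dynamicTrades {F : ℕ → MeasurableSpace E} {l : List (ℕ → E → ℝ)} {p : Trade E} :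
    p ∈ dynamicTrades F T l ↔ ∃ s < T, ∃ W ∈ l, p = ⟨F s, W (s + 1) - W s⟩ := by
  simp [dynamicTrades, eq_comm]

lemma mem_exchangeTrades {Ys : Fin R → Fin N → Ω → ℝ} {p : Trade (Σ _ : Fin N, Ω)} :
    p ∈ exchangeTrades Ys ↔
      (∃ i, p = ⟨⊥, fun x => (if x.1 = i then 1 else 0) - (N : ℝ)⁻¹⟩) ∨
        ∃ r, p = ⟨⊥, stack (Ys r)⟩ := by
  simp [exchangeTrades, eq_comm]

lemma mem_stackedAssets {assets : Fin N → Finset (Fin J)} {X : Fin J → ℕ → Ω → ℝ}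
    {W : ℕ → (Σ _ : Fin N, Ω) → ℝ} :
    W ∈ stackedAssets assets X ↔
      ∃ j, W = fun t => stack fun i => if j ∈ assets i then X j t else 0 := by
  simp [stackedAssets, eq_comm]

lemma isNested_dynamicTrades {F : ℕ → MeasurableSpace E} (hF : Monotone F) (T : ℕ)
    (l : List (ℕ → E → ℝ)) : IsNested (dynamicTrades F T l) := by
  refine List.pairwise_flatMap.2 ⟨fun s _ => ?_, List.pairwise_lt_range.imp ?_⟩
  · exact List.pairwise_map.2 (List.pairwise_of_forall fun _ _ => le_rfl)
  · intro s t hst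
    simpa only [List.forall_mem_map] using fun _ _ _ _ => hF hst.le

lemma info_eq_bot_of_mem_exchangeTrades {Ys : Fin R → Fin N → Ω → ℝ}
    {p : Trade (Σ _ : Fin N, Ω)} (hp : p ∈ exchangeTrades Ys) : p.info = ⊥ := by
  rcases mem_exchangeTrades.1 hp with ⟨_, rfl⟩ | ⟨_, rfl⟩ <;> rfl

lemma isNested_exchangeTrades (Ys : Fin R → Fin N → Ω → ℝ) : IsNested (exchangeTrades Ys) :=
  List.pairwise_of_forall_mem_list fun _ hp _ _ =>
    (info_eq_bot_of_mem_exchangeTrades hp).trans_le bot_le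

lemma isNested_collectiveTrades {F : Fin N → ℕ → MeasurableSpace Ω} (hF : ∀ i, Monotone (F i))
    (T : ℕ) (Ys : Fin R → Fin N → Ω → ℝ) (l : List (ℕ → (Σ _ : Fin N, Ω) → ℝ)) :
    IsNested (collectiveTrades F T Ys l) :=
  List.pairwise_append.2 ⟨isNested_exchangeTrades Ys,
    isNested_dynamicTrades (fun _ _ hst => stackSpace_mono fun i => hF i hst) T l,
    fun _ hp _ _ => (info_eq_bot_of_mem_exchangeTrades hp).trans_le bot_le⟩

section Measurability

variable [m0 : MeasurableSpace Ω] {F : Fin N → ℕ → MeasurableSpace Ω}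

lemma measurable_of_mem_stackedAssets {X : Fin J → ℕ → Ω → ℝ} {assets : Fin N → Finset (Fin J)}
    (hX : ∀ i, ∀ j ∈ assets i, ∀ t, t ≤ T → Measurable (X j t))
    {W : ℕ → (Σ _ : Fin N, Ω) → ℝ} (hW : W ∈ stackedAssets assets X) {t : ℕ} (ht : t ≤ T) :
    Measurable (W t) := by
  obtain ⟨j, rfl⟩ := mem_stackedAssets.1 hW
  refine measurable_stackSpace.2 fun i => ?_
  by_cases hj : j ∈ assets i
  · simpa only [stack, hj, if_true] using hX i j hj t ht
  · simpa only [stack, hj, if_false] using measurable_zero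

lemma info_le_and_measurable_of_mem_collectiveTrades (hF : ∀ i t, F i t ≤ m0)
    {Ys : Fin R → Fin N → Ω → ℝ} (hYs : ∀ r i, Measurable (Ys r i))
    {l : List (ℕ → (Σ _ : Fin N, Ω) → ℝ)} (hl : ∀ W ∈ l, ∀ t ≤ T, Measurable (W t)) :
    ∀ p ∈ collectiveTrades F T Ys l,
      p.info ≤ Sigma.instMeasurableSpace ∧ Measurable p.payoff := by
  intro p hp
  rcases List.mem_append.1 hp with hp | hp
  · rcases mem_exchangeTrades.1 hp with ⟨i, rfl⟩ | ⟨r, rfl⟩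
    · exact ⟨bot_le, measurable_stackSpace.2 fun i' =>
        measurable_const (a := (if i' = i then (1 : ℝ) else 0) - (N : ℝ)⁻¹)⟩
    · exact ⟨bot_le, measurable_stackSpace.2 (hYs r)⟩
  · obtain ⟨s, hs, W, hW, rfl⟩ := mem_dynamicTrades.1 hp
    exact ⟨stackSpace_le fun i => hF i s, (hl W hW _ hs).sub (hl W hW _ hs.le)⟩

end Measurability

section Gains

variable {F : ℕ → MeasurableSpace Ω} {A : Finset (Fin J)} {X : Fin J → ℕ → Ω → ℝ}

/-- `gainsSet` as a vector space. -/
def gainsSubmodule (F : ℕ → MeasurableSpace Ω) (T : ℕ) (A : Finset (Fin J))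
    (X : Fin J → ℕ → Ω → ℝ) : Submodule ℝ (Ω → ℝ) where
  carrier := gainsSet F T A X
  add_mem' := by
    rintro _ _ ⟨H, hH, rfl⟩ ⟨H', hH', rfl⟩
    refine ⟨H + H', fun j hj s h1 hT => ?_, ?_⟩
    · let := F (s - 1)
      exact (hH j hj s h1 hT).add (hH' j hj s h1 hT)
    · ext ω
      simp [add_mul, Finset.sum_add_distrib]
  zero_mem' := ⟨0, fun _ _ s _ _ => @measurable_zero _ _ _ (F (s - 1)) _, by ext; simp⟩
  smul_mem' := by
    rintro c _ ⟨H, hH, rfl⟩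
    refine ⟨c • H, fun j hj s h1 hT => ?_, ?_⟩
    · let := F (s - 1)
      exact (hH j hj s h1 hT).const_smul c
    · ext ω
      simp [Finset.mul_sum, mul_assoc]

/-- `spanExch` as a vector space. -/
def exchangeSubmodule (Ys : Fin R → Fin N → Ω → ℝ) : Submodule ℝ (Fin N → Ω → ℝ) where
  carrier := spanExch Ys
  add_mem' := by
    rintro y y' ⟨x, c, hx, hy⟩ ⟨x', c', hx', hy'⟩
    refine ⟨x + x', c + c', by simp [Finset.sum_add_distrib, hx, hx'], fun i => ?_⟩
    ext ω
    simp only [Pi.add_apply, hy, hy', add_mul, Finset.sum_add_distrib]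
    ring
  zero_mem' := ⟨0, 0, by simp, fun i => by ext; simp⟩
  smul_mem' := by
    rintro a y ⟨x, c, hx, hy⟩
    refine ⟨a • x, a • c, by simp [← Finset.mul_sum, hx], fun i => ?_⟩
    ext ω
    simp [hy, mul_add, Finset.mul_sum, mul_assoc]

lemma sum_Icc_one_eq_sum_range {M : Type*} [AddCommMonoid M] (T : ℕ) (a : ℕ → M) :
    ∑ s ∈ Finset.Icc 1 T, a s = ∑ s ∈ Finset.range T, a (s + 1) := by
  rw [Finset.range_eq_Ico, Finset.sum_Ico_add' a 0 T 1]
  rfl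

lemma mul_price_change_mem_gainsSet {j : Fin J} (hj : j ∈ A) {s : ℕ} (hs : s < T) {h : Ω → ℝ}
    (hh : Measurable[F s] h) : h * (X j (s + 1) - X j s) ∈ gainsSet F T A X := by
  refine ⟨fun j' s' => if j' = j ∧ s' = s + 1 then h else 0, fun j' _ s' _ _ => ?_, ?_⟩
  · by_cases hjs : j' = j ∧ s' = s + 1
    · obtain ⟨rfl, rfl⟩ := hjs
      simpa only [and_self, if_true, Nat.add_sub_cancel] using hh
    · simpa only [hjs, if_false] using @measurable_zero _ _ _ (F (s' - 1)) _
  · ext ω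
    simp [ite_and, ite_apply, hj, hs]

lemma add_const_mul_mem_extGainsSet {k : Ω → ℝ} (hk : k ∈ gainsSet F T A X) (Z : ℕ → Ω → ℝ)
    (a : ℝ) : (fun ω => k ω + a * (Z T ω - Z 0 ω)) ∈ extGainsSet F T A X Z := by
  obtain ⟨H, hH, rfl⟩ := hk
  refine ⟨H, fun _ _ => a, hH, fun s _ _ => @measurable_const _ _ _ (F (s - 1)) a, ?_⟩
  ext ω
  simp only [sum_Icc_one_eq_sum_range, Nat.add_sub_cancel]
  rw [← Finset.mul_sum, Finset.sum_range_sub (fun s => Z s ω)]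

end Gains

variable {F : Fin N → ℕ → MeasurableSpace Ω} {Ys : Fin R → Fin N → Ω → ℝ}
  {assets : Fin N → Finset (Fin J)} {X : Fin J → ℕ → Ω → ℝ}

lemma mul_exchangeTrade_mem_exchangeSubmodule {p : Trade (Σ _ : Fin N, Ω)}
    (hp : p ∈ exchangeTrades Ys) {h : (Σ _ : Fin N, Ω) → ℝ} (hh : Measurable[p.info] h) :
    (fun i ω => (h * p.payoff) ⟨i, ω⟩) ∈ exchangeSubmodule Ys := by
  rcases mem_exchangeTrades.1 hp with ⟨i, rfl⟩ | ⟨r, rfl⟩ <;>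
    obtain ⟨c, rfl⟩ := stronglyMeasurable_bot_iff.1 hh.stronglyMeasurable <;>
    refine Submodule.smul_mem _ c ?_
  · have hN : (N : ℝ) ≠ 0 := Nat.cast_ne_zero.2 i.pos.ne'
    exact ⟨fun i' => (if i' = i then 1 else 0) - (N : ℝ)⁻¹, 0,
      by simp [Finset.sum_sub_distrib, hN], fun i' => by simp⟩
  · exact ⟨0, Pi.single r 1, by simp, fun i => by simp [Pi.single_apply]⟩

lemma mul_dynamicTrade_mem_gainsSubmodule {p : Trade (Σ _ : Fin N, Ω)}
    (hp : p ∈ dynamicTrades (fun t => stackSpace fun i => F i t) T (stackedAssets assets X))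
    {h : (Σ _ : Fin N, Ω) → ℝ} (hh : Measurable[p.info] h) (i : Fin N) :
    (fun ω => (h * p.payoff) ⟨i, ω⟩) ∈ gainsSubmodule (F i) T (assets i) X := by
  obtain ⟨s, hs, W, hW, rfl⟩ := mem_dynamicTrades.1 hp
  obtain ⟨j, rfl⟩ := mem_stackedAssets.1 hW
  by_cases hj : j ∈ assets i
  · simpa [stack, hj] using! mul_price_change_mem_gainsSet hj hs (measurable_stackSpace.1 hh i)
  · convert zero_mem (gainsSubmodule (F i) T (assets i) X)
    simp [stack, hj]

theorem exists_stack_eq_of_mem_tradeGains {g : (Σ _ : Fin N, Ω) → ℝ}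
    (hg : g ∈ tradeGains (collectiveTrades F T Ys (stackedAssets assets X))) :
    ∃ k y : Fin N → Ω → ℝ, (∀ i, k i ∈ gainsSet (F i) T (assets i) X) ∧ y ∈ spanExch Ys ∧
      stack (k + y) = g := by
  have hle : tradeGains (collectiveTrades F T Ys (stackedAssets assets X)) ≤
      (Submodule.pi Set.univ (fun i => gainsSubmodule (F i) T (assets i) X) ⊔
        exchangeSubmodule Ys).comap
          (LinearMap.pi fun i => LinearMap.funLeft ℝ ℝ (Sigma.mk (β := fun _ => Ω) i)) := by
    refine Submodule.span_le.2 ?_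
    rintro _ ⟨p, hp, h, hh, rfl⟩
    rcases List.mem_append.1 hp with hp | hp
    · exact Submodule.mem_sup_right (mul_exchangeTrade_mem_exchangeSubmodule hp hh)
    · exact Submodule.mem_sup_left fun i _ => mul_dynamicTrade_mem_gainsSubmodule hp hh i
  obtain ⟨k, hk, y, hy, hky⟩ := Submodule.mem_sup.1 (hle hg)
  exact ⟨k, y, fun i => hk i trivial, hy, funext fun x => congrFun₂ hky x.1 x.2⟩

lemma stack_mem_tradeGains_exchangeTrades {y : Fin N → Ω → ℝ} (hy : y ∈ spanExch Ys) :
    stack y ∈ tradeGains (exchangeTrades Ys) := by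
  obtain ⟨x, c, hx, hy⟩ := hy
  have zero_sum : (∑ i, x i • fun z : Σ _ : Fin N, Ω => (if z.1 = i then 1 else 0) - (N : ℝ)⁻¹)
      ∈ tradeGains (exchangeTrades Ys) :=
    sum_mem fun i _ => Submodule.smul_mem _ _ <|
      payoff_mem_tradeGains (p := ⟨⊥, _⟩) (mem_exchangeTrades.2 (.inl ⟨i, rfl⟩))
  have generated : (∑ r, c r • stack (Ys r)) ∈ tradeGains (exchangeTrades Ys) :=
    sum_mem fun r _ => Submodule.smul_mem _ _ <|
      payoff_mem_tradeGains (p := ⟨⊥, _⟩) (mem_exchangeTrades.2 (.inr ⟨r, rfl⟩))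
  convert add_mem zero_sum generated using 1
  ext ⟨i, ω⟩
  simp [stack, hy, mul_sub, Finset.sum_sub_distrib, ← Finset.sum_mul, hx]

lemma stack_mem_tradeGains_dynamicTrades {Z : ℕ → (Σ _ : Fin N, Ω) → ℝ} {k : Fin N → Ω → ℝ}
    (hk : ∀ i, k i ∈ extGainsSet (F i) T (assets i) X fun t ω => Z t ⟨i, ω⟩) :
    stack k ∈ tradeGains
      (dynamicTrades (fun t => stackSpace fun i => F i t) T (stackedAssets assets X ++ [Z])) := by
  choose H B hH hB hk using hk
  set L := dynamicTrades (fun t => stackSpace fun i => F i t) T (stackedAssets assets X ++ [Z])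
  have trade_mem {s} (hs : s < T) {W} (hW : W ∈ stackedAssets assets X ++ [Z])
      {h : Fin N → Ω → ℝ} (hh : ∀ i, Measurable[F i s] (h i)) :
      stack h * (W (s + 1) - W s) ∈ tradeGains L :=
    mul_mem_tradeGains (p := ⟨stackSpace fun i => F i s, _⟩)
      (mem_dynamicTrades.2 ⟨s, hs, W, hW, rfl⟩) (measurable_stackSpace.2 hh)
  have asset_gains : (∑ j, ∑ s ∈ Finset.range T,
      stack (fun i => if j ∈ assets i then H i j (s + 1) else 0) *
        (stack (fun i => if j ∈ assets i then X j (s + 1) else 0) -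
          stack fun i => if j ∈ assets i then X j s else 0)) ∈ tradeGains L := by
    refine sum_mem fun j _ => sum_mem fun s hs => ?_
    refine trade_mem (Finset.mem_range.1 hs) (List.mem_append_left _ (mem_stackedAssets.2 ⟨j, rfl⟩))
      fun i => ?_
    by_cases hj : j ∈ assets i
    · simpa only [hj, if_true] using hH i j hj (s + 1) s.succ_pos (Finset.mem_range.1 hs)
    · simpa only [hj, if_false] using @measurable_zero _ _ _ (F i s) _
  have claim_gains : (∑ s ∈ Finset.range T, stack (fun i => B i (s + 1)) * (Z (s + 1) - Z s)) ∈
      tradeGains L :=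
    sum_mem fun s hs => trade_mem (Finset.mem_range.1 hs) (by simp) fun i =>
      hB i (s + 1) s.succ_pos (Finset.mem_range.1 hs)
  convert add_mem asset_gains claim_gains using 1
  ext ⟨i, ω⟩
  simp only [stack, hk, sum_Icc_one_eq_sum_range, Nat.add_sub_cancel, Pi.add_apply,
    Finset.sum_apply, Pi.mul_apply, Pi.sub_apply, ite_apply, Pi.zero_apply, ite_mul, zero_mul,
    Finset.sum_ite_irrel, Finset.sum_const_zero, Finset.sum_ite_mem, Finset.univ_inter]
  refine congrArg (· + _) (Finset.sum_congr rfl fun j hj => ?_)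
  simp only [hj, if_true]

end CollectiveTrades

section Prices

variable {Ω : Type*} {J N R T : ℕ}

lemma IsPricingMeasure.integral_agent_eq [MeasurableSpace Ω] {Q : Measure (Σ _ : Fin N, Ω)}
    [IsFiniteMeasure Q] {Ys : Fin R → Fin N → Ω → ℝ} (hQ : IsPricingMeasure Q (exchangeTrades Ys))
    (b : Fin N → ℝ) :
    Integrable (fun x => b x.1) Q ∧ ∫ x, b x.1 ∂Q = Q.real Set.univ * ((N : ℝ)⁻¹ * ∑ i, b i) := by
  have hb : Integrable (fun x => b x.1) Q :=
    Integrable.of_bound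
      (measurable_stackSpace.2 fun i => measurable_const (a := b i)).aestronglyMeasurable ‖b‖
      (ae_of_all _ fun x => norm_le_pi_norm b x.1)
  refine ⟨hb, ?_⟩
  have sum_sub_mean : ∑ i, (b i - (N : ℝ)⁻¹ * ∑ j, b j) = 0 := by
    rcases N.eq_zero_or_pos with rfl | hN
    · simp
    · simp [Finset.sum_sub_distrib, hN.ne']
  have hmean : Integrable (fun x => b x.1 - (N : ℝ)⁻¹ * ∑ i, b i) Q := hb.sub (integrable_const _)
  have exchange : (stack fun i (_ : Ω) => b i - (N : ℝ)⁻¹ * ∑ j, b j) ∈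
      tradeGains (exchangeTrades Ys) :=
    stack_mem_tradeGains_exchangeTrades ⟨_, 0, sum_sub_mean, fun i => by simp⟩
  have centred : ∫ x, (b x.1 - (N : ℝ)⁻¹ * ∑ i, b i) ∂Q = 0 :=
    (hQ.integral_eq_zero (isNested_exchangeTrades Ys) exchange hmean Filter.EventuallyLE.rfl).2
  rw [integral_sub hb (integrable_const _), integral_const, smul_eq_mul] at centred
  exact sub_eq_zero.1 centred

lemma condExp_condExp_sub_condExp {E : Type*} {G G' : MeasurableSpace E} [m : MeasurableSpace E]
    {Q : Measure E} [IsFiniteMeasure Q] (hGG' : G ≤ G') (hG' : G' ≤ m) (φ : E → ℝ) :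
    Q[Q[φ | G'] - Q[φ | G] | G] =ᵐ[Q] 0 := by
  filter_upwards [condExp_sub (integrable_condExp (f := φ) (m := G'))
      (integrable_condExp (f := φ) (m := G)) G,
    condExp_condExp_of_le (f := φ) hGG' hG', condExp_condExp_of_le (f := φ) le_rfl (hGG'.trans hG')]
    with x hsub hG'x hGx
  rw [hsub, Pi.sub_apply, hG'x, hGx, sub_self, Pi.zero_apply]

lemma IsPricingMeasure.append_condExp {E : Type*} [m : MeasurableSpace E] {Q : Measure E}
    [IsFiniteMeasure Q] {F : ℕ → MeasurableSpace E} (hF : Monotone F) (hFm : ∀ t, F t ≤ m)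
    {l : List (ℕ → E → ℝ)} (hQ : IsPricingMeasure Q (dynamicTrades F T l)) (φ : E → ℝ) :
    IsPricingMeasure Q (dynamicTrades F T (l ++ [fun t => Q[φ | F t]])) := by
  intro p hp
  obtain ⟨s, hs, W, hW, rfl⟩ := mem_dynamicTrades.1 hp
  rcases List.mem_append.1 hW with hW | hW
  · exact hQ _ (mem_dynamicTrades.2 ⟨s, hs, W, hW, rfl⟩)
  · obtain rfl := List.mem_singleton.1 hW
    exact ⟨hFm s, integrable_condExp.sub integrable_condExp,
      condExp_condExp_sub_condExp (hF s.le_succ) (hFm _) φ⟩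

lemma exists_ae_eq_const_of_measure_zero_or_one [m0 : MeasurableSpace Ω] {P : Measure Ω}
    [IsProbabilityMeasure P] {G : MeasurableSpace Ω} (hG : G ≤ m0)
    (h01 : ∀ A : Set Ω, MeasurableSet[G] A → P A = 0 ∨ P A = 1) {h : Ω → ℝ}
    (hh : Measurable[G] h) : ∃ a : ℝ, h =ᵐ[P] fun _ => a := by
  refine Filter.exists_eventuallyEq_const_of_forall_separating MeasurableSet fun U hU => ?_
  have hm : MeasurableSet[G] (h ⁻¹' U) := hh hU
  rcases h01 _ hm with h0 | h1
  · exact .inr (measure_eq_zero_iff_ae_notMem.1 h0)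
  · exact .inl ((prob_compl_eq_zero_iff (hG _ hm)).2 h1)

variable [m0 : MeasurableSpace Ω] {P : Measure Ω}
  {F : Fin N → ℕ → MeasurableSpace Ω} {X : Fin J → ℕ → Ω → ℝ} {assets : Fin N → Finset (Fin J)}
  {Ys : Fin R → Fin N → Ω → ℝ} {f : Fin N → Ω → ℝ} {π : Fin N → ℝ}

lemma noArbitrage_collectiveTrades
    (hNCA : NCA P (fun i => gainsSet (F i) T (assets i) X) (spanExch Ys)) :
    NoArbitrage (stackMeasure (Fin N) P)
      (collectiveTrades F T Ys (stackedAssets assets X)) := by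
  intro g hg hg0
  obtain ⟨k, y, hk, hy, rfl⟩ := exists_stack_eq_of_mem_tradeGains hg
  exact ae_stackMeasure.2 (hNCA k y hy hk (ae_stackMeasure.1 hg0))

lemma nca_extGainsSet_of_noArbitrage {Z : ℕ → (Σ _ : Fin N, Ω) → ℝ}
    (hNA : NoArbitrage (stackMeasure (Fin N) P)
      (collectiveTrades F T Ys (stackedAssets assets X ++ [Z]))) :
    NCA P (fun i => extGainsSet (F i) T (assets i) X fun t ω => Z t ⟨i, ω⟩) (spanExch Ys) := by
  intro k y hy hk hky
  exact ae_stackMeasure.1 (hNA (stack (k + y)) (add_mem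
    (tradeGains_mono (List.subset_append_right _ _) (stack_mem_tradeGains_dynamicTrades hk))
    (tradeGains_mono (List.subset_append_left _ _) (stack_mem_tradeGains_exchangeTrades hy)))
    (ae_stackMeasure.2 hky))

theorem IsPricingMeasure.exists_isNCAPrice [IsProbabilityMeasure P]
    (hFmono : ∀ i, Monotone (F i)) (hFle : ∀ i t, F i t ≤ m0)
    (hFzero : ∀ i, ∀ A : Set Ω, MeasurableSet[F i 0] A → P A = 0 ∨ P A = 1)
    (hf : ∀ i, Measurable[F i T] (f i)) {Q : Measure (Σ _ : Fin N, Ω)} [IsFiniteMeasure Q]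
    (hQ : IsPricingMeasure Q (collectiveTrades F T Ys (stackedAssets assets X)))
    (hQP : Q ≪ stackMeasure (Fin N) P) (hPQ : stackMeasure (Fin N) P ≪ Q)
    (hfQ : Integrable (stack f) Q) :
    ∃ π : Fin N → ℝ, IsNCAPrice P F T assets X (spanExch Ys) f π ∧
      ∫ x, stack f x ∂Q = ∫ x, π x.1 ∂Q := by
  let S : ℕ → MeasurableSpace (Σ _ : Fin N, Ω) := fun t => stackSpace fun i => F i t
  have hS_mono : Monotone S := fun s t hst => stackSpace_mono fun i => hFmono i hst
  have hS_le (t) : S t ≤ Sigma.instMeasurableSpace := stackSpace_le fun i => hFle i t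
  let Z : ℕ → (Σ _ : Fin N, Ω) → ℝ := fun t => Q[stack f | S t]
  have hZ_meas (i t) : Measurable[F i t] fun ω => Z t ⟨i, ω⟩ :=
    measurable_stackSpace.1 stronglyMeasurable_condExp.measurable i
  have hZT : Z T = stack f := condExp_of_stronglyMeasurable (hS_le T)
    (measurable_stackSpace.2 hf).stronglyMeasurable hfQ
  choose π hπ using fun i =>
    exists_ae_eq_const_of_measure_zero_or_one (hFle i 0) (hFzero i) (hZ_meas i 0)
  obtain ⟨hQ_exchange, hQ_dynamic⟩ := List.forall_mem_append.1 hQ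
  have hQ_ext : IsPricingMeasure Q (collectiveTrades F T Ys (stackedAssets assets X ++ [Z])) :=
    List.forall_mem_append.2
      ⟨hQ_exchange, IsPricingMeasure.append_condExp hS_mono hS_le hQ_dynamic (stack f)⟩
  refine ⟨π, ⟨fun i t ω => Z t ⟨i, ω⟩, fun i t _ => hZ_meas i t, hπ, fun i => by simp [hZT],
    nca_extGainsSet_of_noArbitrage ((hQ_ext.noArbitrage
      (isNested_collectiveTrades hFmono T Ys _)).congr_measure hPQ hQP)⟩, ?_⟩
  rw [← integral_condExp (hS_le 0)]
  exact integral_congr_ae (hQP.ae_le (ae_stackMeasure.2 hπ))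

theorem exists_isNCAPrice_sum_lt [IsProbabilityMeasure P] (hFmono : ∀ i, Monotone (F i))
    (hFle : ∀ i t, F i t ≤ m0)
    (hFzero : ∀ i, ∀ A : Set Ω, MeasurableSet[F i 0] A → P A = 0 ∨ P A = 1)
    (hX : ∀ i, ∀ j ∈ assets i, ∀ t, t ≤ T → Measurable[F i t] (X j t))
    (hYs : ∀ r i, Measurable[F i T] (Ys r i))
    (hNCA : NCA P (fun i => gainsSet (F i) T (assets i) X) (spanExch Ys))
    (hf : ∀ i, Measurable[F i T] (f i)) (c : Fin N → ℝ) :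
    ∃ π : Fin N → ℝ, IsNCAPrice P F T assets X (spanExch Ys) f π ∧
      (SuperReplicable (stackMeasure (Fin N) P)
          (collectiveTrades F T Ys (stackedAssets assets X)) (stack fun i ω => f i ω - c i) ∨
        ∑ i, c i < ∑ i, π i) := by
  have trades_meas := info_le_and_measurable_of_mem_collectiveTrades hFle
    (fun r i => (hYs r i).mono (hFle i T) le_rfl) (fun W hW t ht =>
      measurable_of_mem_stackedAssets (fun i j hj t ht => (hX i j hj t ht).mono (hFle i t) le_rfl)
        hW ht)
  have claim_meas : Measurable (stack fun i ω => f i ω - c i) := measurable_stackSpace.2 fun i =>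
    ((hf i).mono (hFle i T) le_rfl).sub_const (c i)
  obtain ⟨Q, hQfin, hQP, hPQ, hQ, hfcQ, hQ_pos⟩ := exists_isPricingMeasure (stackMeasure (Fin N) P)
    (isNested_collectiveTrades hFmono T Ys _) trades_meas (noArbitrage_collectiveTrades hNCA)
    claim_meas
  have agent_integral := IsPricingMeasure.integral_agent_eq (Q := Q) (Ys := Ys)
    fun p hp => hQ p (List.mem_append_left _ hp)
  have hfQ : Integrable (stack f) Q :=
    (hfcQ.add (agent_integral c).1).congr (ae_of_all _ fun x => sub_add_cancel _ _)
  obtain ⟨π, hπ, hfπ⟩ := hQ.exists_isNCAPrice hFmono hFle hFzero hf hQP hPQ hfQ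
  refine ⟨π, hπ, hQ_pos.imp_right fun hpos => ?_⟩
  rw [integral_sub hfQ (agent_integral c).1, hfπ, (agent_integral π).2, (agent_integral c).2,
    ← mul_sub, ← mul_sub, ← mul_assoc] at hpos
  exact sub_pos.1 (pos_of_mul_pos_right hpos (by positivity))

lemma exists_superreplication_of_rhoIPlus_lt_top {Ki : Set (Ω → ℝ)} {g : Ω → ℝ}
    (h : rhoIPlus P Ki g < ⊤) : ∃ a : ℝ, ∃ k ∈ Ki, ∀ᵐ ω ∂P, g ω ≤ a + k ω := by
  obtain ⟨_, ⟨a, -, ha⟩, -⟩ := sInf_lt_iff.1 h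
  exact ⟨a, ha⟩

lemma IsNCAPrice.le_of_le_add_gain [NeZero P]
    (hπ : IsNCAPrice P F T assets X (spanExch Ys) f π) {i : Fin N} {a : ℝ} {k : Ω → ℝ}
    (hk : k ∈ gainsSet (F i) T (assets i) X) (hfk : ∀ᵐ ω ∂P, f i ω ≤ a + k ω) : π i ≤ a := by
  obtain ⟨Z, -, hZ0, hZT, hNCA⟩ := hπ
  by_contra! hlt
  have single_mem (j) :
      (Pi.single i k : Fin N → Ω → ℝ) j ∈ gainsSubmodule (F j) T (assets j) X := by
    rcases eq_or_ne j i with rfl | hj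
    · rwa [Pi.single_eq_same]
    · rw [Pi.single_eq_of_ne hj]
      exact zero_mem _
  have gain_pos : ∀ᵐ ω ∂P, 0 < k ω + -1 * (Z i T ω - Z i 0 ω) := by
    filter_upwards [hfk, hZ0 i, hZT i] with ω hfω h0 hT
    rw [h0, hT]
    linarith
  have gain_zero := hNCA _ 0 (zero_mem (exchangeSubmodule Ys))
    (fun j => add_const_mul_mem_extGainsSet (single_mem j) (Z j)
      ((Pi.single i (-1) : Fin N → ℝ) j)) (fun j => by
    rcases eq_or_ne j i with rfl | hj
    · filter_upwards [gain_pos] with ω hω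
      simpa using hω.le
    · simp [hj]) i
  obtain ⟨ω, hpos, hzero⟩ := (gain_pos.and gain_zero).exists
  simp only [Pi.single_eq_same, Pi.zero_apply, add_zero] at hzero
  exact hpos.ne' hzero

lemma IsNCAPrice.replicable_of_superReplicable
    (hπ : IsNCAPrice P F T assets X (spanExch Ys) f π)
    (hf : SuperReplicable (stackMeasure (Fin N) P)
      (collectiveTrades F T Ys (stackedAssets assets X)) (stack fun i ω => f i ω - π i)) :
    Replicable P (fun i => gainsSet (F i) T (assets i) X) (spanExch Ys) f := by
  obtain ⟨Z, -, hZ0, hZT, hNCA⟩ := hπ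
  obtain ⟨g, hg, hfg⟩ := hf
  obtain ⟨k, y, hk, hy, rfl⟩ := exists_stack_eq_of_mem_tradeGains hg
  have surplus_zero := hNCA _ y hy
    (fun i => add_const_mul_mem_extGainsSet (hk i) (Z i) (-1)) fun i => by
    filter_upwards [ae_stackMeasure.1 hfg i, hZ0 i, hZT i] with ω hω h0 hT
    simp only [stack, Pi.add_apply] at hω
    rw [h0, hT]
    linarith
  refine ⟨π, k, y, hy, hk, fun i => ?_⟩
  filter_upwards [surplus_zero i, hZ0 i, hZT i] with ω hω h0 hT
  rw [h0, hT] at hω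
  linarith

lemma exists_isMaxOn_sum {ι : Type*} [Fintype ι] {S : Set (ι → ℝ)} (hS : IsClosed S)
    (hne : S.Nonempty) (hbdd : BddAbove S) : ∃ x ∈ S, IsMaxOn (fun x => ∑ i, x i) S x := by
  obtain ⟨x₀, hx₀⟩ := hne
  obtain ⟨a, ha⟩ := hbdd
  have hcont : Continuous fun x : ι → ℝ => ∑ i, x i := by fun_prop
  have hcompact : IsCompact (S ∩ {x | ∑ i, x₀ i ≤ ∑ i, x i}) := by
    refine (isCompact_Icc (a := fun i => a i - (∑ j, a j - ∑ j, x₀ j)) (b := a)).of_isClosed_subset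
      (hS.inter (isClosed_le continuous_const hcont)) fun x ⟨hx, hx₀x⟩ => ⟨fun i => ?_, ha hx⟩
    have deficit_le : a i - x i ≤ ∑ j, (a j - x j) :=
      Finset.single_le_sum (fun j _ => sub_nonneg.2 (ha hx j)) (Finset.mem_univ i)
    rw [Finset.sum_sub_distrib] at deficit_le
    change ∑ j, x₀ j ≤ ∑ j, x j at hx₀x
    linarith
  obtain ⟨x, ⟨hx, hx₀x⟩, hmax⟩ := hcompact.exists_isMaxOn ⟨x₀, hx₀, le_refl (∑ i, x₀ i)⟩
    hcont.continuousOn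
  refine ⟨x, hx, fun y hy => ?_⟩
  rcases le_total (∑ i, x₀ i) (∑ i, y i) with hy₀ | hy₀
  · exact hmax ⟨hy, hy₀⟩
  · exact hy₀.trans hx₀x

end Prices

theorem NCA_prices_not_closed_general
    {Ω : Type*} [m0 : MeasurableSpace Ω] (P : Measure Ω) [IsProbabilityMeasure P] (T J N : ℕ)
    (F : Fin N → ℕ → MeasurableSpace Ω)
    (hFmono : ∀ i, Monotone (F i))
    (hFle : ∀ i t, F i t ≤ m0)
    (hFzero : ∀ i, ∀ A : Set Ω, MeasurableSet[F i 0] A → P A = 0 ∨ P A = 1)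
    (X : Fin J → ℕ → Ω → ℝ)
    (assets : Fin N → Finset (Fin J))
    (hadapted : ∀ i, ∀ j ∈ assets i, ∀ t, t ≤ T → Measurable[F i t] (X j t))
    (R : ℕ) (Ys : Fin R → Fin N → Ω → ℝ)
    (hYsmeas : ∀ r i, Measurable[F i T] (Ys r i))
    (hNCA : NCA P (fun i => gainsSet (F i) T (assets i) X) (spanExch Ys))
    (f : Fin N → Ω → ℝ) (hfmeas : ∀ i, Measurable[F i T] (f i))
    (hfnotrep : ¬ Replicable P (fun i => gainsSet (F i) T (assets i) X) (spanExch Ys) f)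
    (hfin : ∀ i, rhoIPlus P (gainsSet (F i) T (assets i) X) (f i) < ⊤) :
    ¬ IsClosed {π : Fin N → ℝ | IsNCAPrice P F T assets X (spanExch Ys) f π} := by
  intro hclosed
  have exists_price := exists_isNCAPrice_sum_lt hFmono hFle hFzero hadapted hYsmeas hNCA hfmeas
  choose a k hk hfk using fun i => exists_superreplication_of_rhoIPlus_lt_top (hfin i)
  obtain ⟨π₀, hπ₀, -⟩ := exists_price 0
  obtain ⟨π, hπ, hmax⟩ := exists_isMaxOn_sum hclosed ⟨π₀, hπ₀⟩
    ⟨a, fun π hπ i => hπ.le_of_le_add_gain (hk i) (hfk i)⟩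
  obtain ⟨ρ, hρ, hsuper | hlt⟩ := exists_price π
  · exact hfnotrep (hπ.replicable_of_superReplicable hsuper)
  · exact hlt.not_ge (hmax hρ)

/-- for a non-replicable claim with finite classical super-replication
prices, the set of NCA(𝒴)-prices is not closed (Proposition notclosed). -/
theorem NCA_prices_not_closed
    {Ω : Type*} [m0 : MeasurableSpace Ω]
    (P : Measure Ω) [IsProbabilityMeasure P]
    (T J N : ℕ) (hT : 1 ≤ T) (hJ : 1 ≤ J) (hN : 1 ≤ N)
    (F : Fin N → ℕ → MeasurableSpace Ω)
    (hFmono : ∀ i, Monotone (F i))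
    (hFle : ∀ i t, F i t ≤ m0)
    (hFzero : ∀ i, ∀ A : Set Ω, MeasurableSet[F i 0] A → P A = 0 ∨ P A = 1)
    (X : Fin J → ℕ → Ω → ℝ)
    (assets : Fin N → Finset (Fin J))
    (hassets : ∀ i, (assets i).Nonempty)
    (hcover : ∀ j, ∃ i, j ∈ assets i)
    (hadapted : ∀ i, ∀ j ∈ assets i, ∀ t, t ≤ T → Measurable[F i t] (X j t))
    (R : ℕ) (Ys : Fin R → Fin N → Ω → ℝ)
    (hYsmeas : ∀ r i, Measurable[F i T] (Ys r i))
    (hNCA : NCA P (fun i => gainsSet (F i) T (assets i) X) (spanExch Ys))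
    (f : Fin N → Ω → ℝ) (hfmeas : ∀ i, Measurable[F i T] (f i))
    (hfnotrep : ¬ Replicable P (fun i => gainsSet (F i) T (assets i) X) (spanExch Ys) f)
    (hfin₁ : ∀ i, rhoIPlus P (gainsSet (F i) T (assets i) X) (f i) < ⊤)
    (hfin₂ : ∀ i, rhoIPlus P (gainsSet (F i) T (assets i) X) (fun ω => - f i ω) < ⊤) :
    ¬ IsClosed { pi : Fin N → ℝ | IsNCAPrice P F T assets X (spanExch Ys) f pi } := by
  exact NCA_prices_not_closed_general P T J N F hFmono hFle hFzero X assets hadapted R Ys hYsmeas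
    hNCA f hfmeas hfnotrep hfin₁

end CollectiveArb
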